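/- arXiv:1606.04626 — 6 statements merged into one kernel-verified Lean document; each statement's English description precedes it below -/
import Mathlib

section
/- Let n ≥ 2 be an integer. There exist smooth functions χ_k : ℝ^{n+1} → ℝ with 0 ≤ χ_k ≤ 1, χ_k radially symmetric, χ_k(x) = 1 whenever |x| < 1/(2k²), χ_k(x) = 0 whenever |x| > 1/k, and a sequence of real numbers c_k with c_k → 0 as k → ∞, with the following property: for every c > 0 and every Borel measure μ on ℝ^{n+1} such that μ({x : 0 < |x| ≤ ρ}) ≤ c·ρⁿ for all 0 < ρ ≤ 1, one has ∫ |∇χ_k(x)|² dμ(x) ≤ c·c_k for every k. -/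
open MeasureTheory Filter

/-!
Average `N` dyadic rescalings `φ (2 ^ j r x)` of one radial bump `φ`. As `n ≥ 2`, the growth
hypothesis gives `μ {0 < ‖x‖ ≤ ρ} ≤ c ρ²` for `ρ ≤ 1`, under which the Dirichlet energy of
`φ (a x)` is bounded independently of `a ≥ 1`. The gradients of the `N` rescalings live on disjoint
annuli, so the energies add up to `O(N)`, and the factor `N⁻²` coming from the average leaves
`O(N⁻¹)`. The scales between `1 / k ^ 2` and `1 / k` leave room for `N ∼ log₂ k` rescalings.
-/

open scoped NNReal ENNReal

theorem enorm_sum_sq_of_support_subsingleton {ι F : Type*} [SeminormedAddCommGroup F]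
    (s : Finset ι) {v : ι → F} (hv : (Function.support v).Subsingleton) :
    ‖∑ i ∈ s, v i‖ₑ ^ 2 = ∑ i ∈ s, ‖v i‖ₑ ^ 2 := by
  by_cases h : ∃ i ∈ s, v i ≠ 0
  · obtain ⟨i, his, hi⟩ := h
    have hzero : ∀ j, j ≠ i → v j = 0 := fun j hji ↦
      by_contra fun hj ↦ hji (hv hj hi)
    rw [Finset.sum_eq_single_of_mem i his fun j _ hji ↦ hzero j hji,
      Finset.sum_eq_single_of_mem i his fun j _ hji ↦ by simp [hzero j hji, enorm_eq_nnnorm]]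
  · push Not at h
    rw [Finset.sum_eq_zero h, Finset.sum_eq_zero fun i hi ↦ by simp [h i hi, enorm_eq_nnnorm]]
    simp [enorm_eq_nnnorm]

theorem eq_of_pow_mul_mem_Ioc_inv_one {b t : ℝ} (hb : 1 ≤ b) {i j : ℕ}
    (hi : b ^ i * t ∈ Set.Ioc b⁻¹ 1) (hj : b ^ j * t ∈ Set.Ioc b⁻¹ 1) : i = j := by
  have hb0 : 0 < b := by positivity
  wlog hij : i < j generalizing i j
  · rcases (not_lt.1 hij).eq_or_lt with h | h
    · exact h.symm
    · exact (this hj hi h).symm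
  have ht : 0 < t := pos_of_mul_pos_right ((inv_pos.2 hb0).trans hi.1) (by positivity)
  have : 1 < b ^ j * t := calc
    1 = b * b⁻¹ := (mul_inv_cancel₀ hb0.ne').symm
    _ < b * (b ^ i * t) := by gcongr; exact hi.1
    _ = b ^ (i + 1) * t := by ring
    _ ≤ b ^ j * t := by gcongr; exact hij
  exact absurd hj.2 this.not_ge

theorem lintegral_enorm_fderiv_comp_smul_sq_le {E F : Type*} [NormedAddCommGroup E]
    [NormedSpace ℝ E] [MeasurableSpace E] [NormedAddCommGroup F] [NormedSpace ℝ F]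
    {μ : Measure E} {φ : E → F} {A : ℝ≥0∞} {C : ℝ≥0} {a : ℝ} (ha : 0 < a)
    (hsupp : ∀ y, fderiv ℝ φ y ≠ 0 → ‖y‖ ∈ Set.Ioc 0 1) (hC : ∀ y, ‖fderiv ℝ φ y‖ₑ ≤ C)
    (hμ : μ {x | 0 < ‖x‖ ∧ ‖x‖ ≤ a⁻¹} ≤ A * ENNReal.ofReal (a⁻¹ ^ 2)) :
    ∫⁻ x, ‖fderiv ℝ (fun x ↦ φ (a • x)) x‖ₑ ^ 2 ∂μ ≤ A * C ^ 2 := by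
  set S : Set E := {x | 0 < ‖x‖ ∧ ‖x‖ ≤ a⁻¹}
  have hpoint (x : E) : ‖fderiv ℝ (fun x ↦ φ (a • x)) x‖ₑ ^ 2 ≤
      S.indicator (fun _ ↦ (ENNReal.ofReal a * C) ^ 2) x := by
    rw [fderiv_comp_smul, enorm_smul, Real.enorm_of_nonneg ha.le]
    by_cases h : fderiv ℝ φ (a • x) = 0
    · simp [h, enorm_eq_nnnorm]
    · have hx : x ∈ S := by
        have := hsupp _ h
        rw [norm_smul, Real.norm_of_nonneg ha.le] at this
        exact ⟨pos_of_mul_pos_right this.1 ha.le,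
          one_div a ▸ (le_div_iff₀' ha).2 this.2⟩
      rw [Set.indicator_of_mem hx]
      gcongr
      exact hC _
  calc ∫⁻ x, ‖fderiv ℝ (fun x ↦ φ (a • x)) x‖ₑ ^ 2 ∂μ
      ≤ ∫⁻ x, S.indicator (fun _ ↦ (ENNReal.ofReal a * C) ^ 2) x ∂μ := lintegral_mono hpoint
    _ ≤ (ENNReal.ofReal a * C) ^ 2 * μ S := lintegral_indicator_const_le _ _
    _ ≤ (ENNReal.ofReal a * C) ^ 2 * (A * ENNReal.ofReal (a⁻¹ ^ 2)) := by gcongr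
    _ = A * C ^ 2 * (ENNReal.ofReal a ^ 2 * ENNReal.ofReal (a⁻¹ ^ 2)) := by ring
    _ = A * C ^ 2 := by
      rw [← ENNReal.ofReal_pow ha.le, ← ENNReal.ofReal_mul (by positivity), ← mul_pow,
        mul_inv_cancel₀ ha.ne', one_pow, ENNReal.ofReal_one, mul_one]

section DyadicAverage

variable {E : Type*} [NormedAddCommGroup E] [NormedSpace ℝ E] {φ : E → ℝ} {r : ℝ} {N : ℕ}

/-- The mean of the `N` dyadic rescalings `φ (2 ^ j r x)`, `j < N`; a discrete form of a
logarithmic profile in `‖x‖`. It is `0` for `N = 0`. -/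
noncomputable def dyadicAverage (φ : E → ℝ) (r : ℝ) (N : ℕ) (x : E) : ℝ :=
  (N : ℝ)⁻¹ * ∑ j ∈ Finset.range N, φ (((2 : ℝ) ^ j * r) • x)

theorem contDiff_dyadicAverage {m : WithTop ℕ∞} (hφ : ContDiff ℝ m φ) :
    ContDiff ℝ m (dyadicAverage φ r N) :=
  contDiff_const.mul (ContDiff.sum fun _ _ ↦ hφ.comp (contDiff_id.const_smul _))

theorem dyadicAverage_mem_Icc (hφ : ∀ y, φ y ∈ Set.Icc 0 1) (x : E) :
    dyadicAverage φ r N x ∈ Set.Icc 0 1 := by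
  refine ⟨mul_nonneg (by positivity) (Finset.sum_nonneg fun _ _ ↦ (hφ _).1), ?_⟩
  have hsum : ∑ j ∈ Finset.range N, φ (((2 : ℝ) ^ j * r) • x) ≤ N := by
    simpa using Finset.sum_le_card_nsmul (Finset.range N) _ 1 fun j _ ↦
      (hφ (((2 : ℝ) ^ j * r) • x)).2
  exact (mul_le_mul_of_nonneg_left hsum (by positivity)).trans inv_mul_le_one

theorem dyadicAverage_eq_of_norm_eq (hφ : ∀ x y, ‖x‖ = ‖y‖ → φ x = φ y) {x y : E}
    (hxy : ‖x‖ = ‖y‖) : dyadicAverage φ r N x = dyadicAverage φ r N y := by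
  unfold dyadicAverage
  congr! 2 with j
  exact hφ _ _ (by rw [norm_smul, norm_smul, hxy])

theorem dyadicAverage_eq_one (hφ : ∀ y, ‖y‖ ≤ 2⁻¹ → φ y = 1) (hr : 0 ≤ r) (hN : N ≠ 0) {x : E}
    (hx : 2 ^ N * r * ‖x‖ ≤ 1) : dyadicAverage φ r N x = 1 := by
  have hterm : ∀ j ∈ Finset.range N, φ (((2 : ℝ) ^ j * r) • x) = 1 := fun j hj ↦ by
    refine hφ _ ?_
    rw [norm_smul, Real.norm_of_nonneg (by positivity)]
    have : (2 : ℝ) ^ (j + 1) * r * ‖x‖ ≤ 2 ^ N * r * ‖x‖ := by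
      gcongr
      exacts [one_le_two, Finset.mem_range.1 hj]
    rw [pow_succ] at this
    linarith
  simp [dyadicAverage, Finset.sum_congr rfl hterm, hN]

theorem dyadicAverage_eq_zero (hφ : ∀ y, 1 ≤ ‖y‖ → φ y = 0) {x : E} (hx : 1 ≤ r * ‖x‖) :
    dyadicAverage φ r N x = 0 := by
  have hterm : ∀ j ∈ Finset.range N, φ (((2 : ℝ) ^ j * r) • x) = 0 := fun j _ ↦ by
    refine hφ _ ?_
    calc 1 ≤ r * ‖x‖ := hx
      _ ≤ 2 ^ j * (r * ‖x‖) :=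
        le_mul_of_one_le_left (zero_le_one.trans hx) (one_le_pow₀ one_le_two)
      _ ≤ ‖((2 : ℝ) ^ j * r) • x‖ := by
        rw [norm_smul, ← mul_assoc]
        gcongr
        exact Real.le_norm_self _
  rw [dyadicAverage, Finset.sum_eq_zero hterm, mul_zero]

theorem fderiv_dyadicAverage (hφ : Differentiable ℝ φ) (x : E) :
    fderiv ℝ (dyadicAverage φ r N) x =
      (N : ℝ)⁻¹ • ∑ j ∈ Finset.range N, fderiv ℝ (fun x ↦ φ (((2 : ℝ) ^ j * r) • x)) x := by
  have hd (j : ℕ) : DifferentiableAt ℝ (fun x ↦ φ (((2 : ℝ) ^ j * r) • x)) x := by fun_prop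
  unfold dyadicAverage
  rw [fderiv_const_mul (by fun_prop), fderiv_fun_sum fun j _ ↦ hd j]

theorem enorm_fderiv_dyadicAverage_sq (hφ : Differentiable ℝ φ) (hr : 0 ≤ r)
    (hsupp : ∀ y, fderiv ℝ φ y ≠ 0 → ‖y‖ ∈ Set.Ioc 2⁻¹ 1) (x : E) :
    ‖fderiv ℝ (dyadicAverage φ r N) x‖ₑ ^ 2 = ‖(N : ℝ)⁻¹‖ₑ ^ 2 *
      ∑ j ∈ Finset.range N, ‖fderiv ℝ (fun x ↦ φ (((2 : ℝ) ^ j * r) • x)) x‖ₑ ^ 2 := by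
  have hannulus (j : ℕ) (hj : fderiv ℝ (fun x ↦ φ (((2 : ℝ) ^ j * r) • x)) x ≠ 0) :
      2 ^ j * (r * ‖x‖) ∈ Set.Ioc 2⁻¹ 1 := by
    rw [fderiv_comp_smul] at hj
    have := hsupp _ (right_ne_zero_of_smul hj)
    rwa [norm_smul, Real.norm_of_nonneg (by positivity), mul_assoc] at this
  rw [fderiv_dyadicAverage hφ, enorm_smul, mul_pow, enorm_sum_sq_of_support_subsingleton]
  exact fun i hi j hj ↦
    eq_of_pow_mul_mem_Ioc_inv_one one_le_two (hannulus i hi) (hannulus j hj)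

theorem lintegral_enorm_fderiv_dyadicAverage_sq_le [MeasurableSpace E] [OpensMeasurableSpace E]
    {μ : Measure E} {A : ℝ≥0∞} {C : ℝ≥0} (hφ : ContDiff ℝ 1 φ) (hr : 1 ≤ r)
    (hsupp : ∀ y, fderiv ℝ φ y ≠ 0 → ‖y‖ ∈ Set.Ioc 2⁻¹ 1) (hC : ∀ y, ‖fderiv ℝ φ y‖ₑ ≤ C)
    (hμ : ∀ ρ : ℝ, 0 < ρ → ρ ≤ 1 → μ {x | 0 < ‖x‖ ∧ ‖x‖ ≤ ρ} ≤ A * ENNReal.ofReal (ρ ^ 2)) :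
    ∫⁻ x, ‖fderiv ℝ (dyadicAverage φ r N) x‖ₑ ^ 2 ∂μ ≤ A * C ^ 2 * ENNReal.ofReal (N : ℝ)⁻¹ := by
  have hmeas (j : ℕ) :
      Measurable fun x ↦ ‖fderiv ℝ (fun x ↦ φ (((2 : ℝ) ^ j * r) • x)) x‖ₑ ^ 2 :=
    ((hφ.comp (contDiff_id.const_smul _)).continuous_fderiv
      one_ne_zero).enorm.measurable.pow_const 2
  have henergy (j : ℕ) :
      ∫⁻ x, ‖fderiv ℝ (fun x ↦ φ (((2 : ℝ) ^ j * r) • x)) x‖ₑ ^ 2 ∂μ ≤ A * C ^ 2 := by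
    have ha : 1 ≤ (2 : ℝ) ^ j * r := one_le_mul_of_one_le_of_one_le (one_le_pow₀ one_le_two) hr
    have ha0 : 0 < (2 : ℝ) ^ j * r := zero_lt_one.trans_le ha
    exact lintegral_enorm_fderiv_comp_smul_sq_le ha0
      (fun y hy ↦ Set.Ioc_subset_Ioc_left (by positivity) (hsupp y hy)) hC
      (hμ _ (inv_pos.2 ha0) (inv_le_one_of_one_le₀ ha))
  calc ∫⁻ x, ‖fderiv ℝ (dyadicAverage φ r N) x‖ₑ ^ 2 ∂μ
      = ‖(N : ℝ)⁻¹‖ₑ ^ 2 * ∑ j ∈ Finset.range N,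
          ∫⁻ x, ‖fderiv ℝ (fun x ↦ φ (((2 : ℝ) ^ j * r) • x)) x‖ₑ ^ 2 ∂μ := by
        simp_rw [enorm_fderiv_dyadicAverage_sq (hφ.differentiable one_ne_zero)
          (zero_le_one.trans hr) hsupp]
        rw [lintegral_const_mul _ (by fun_prop), lintegral_finsetSum _ fun j _ ↦ hmeas j]
    _ ≤ ‖(N : ℝ)⁻¹‖ₑ ^ 2 * ∑ j ∈ Finset.range N, A * C ^ 2 := by
        gcongr
        exact henergy _
    _ = A * C ^ 2 * ENNReal.ofReal ((N : ℝ)⁻¹ ^ 2 * N) := by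
        rw [Finset.sum_const, Finset.card_range, nsmul_eq_mul, Real.enorm_of_nonneg (by positivity),
          ENNReal.ofReal_mul (by positivity), ENNReal.ofReal_pow (by positivity),
          ENNReal.ofReal_natCast]
        ring
    _ = A * C ^ 2 * ENNReal.ofReal (N : ℝ)⁻¹ := by
        congr 2
        rcases eq_or_ne N 0 with rfl | hN
        · simp
        · field_simp

end DyadicAverage

section LogCutoff

variable {E : Type*} [NormedAddCommGroup E]

/-- A radial bump, equal to `1` on the ball of radius `1 / 2` and supported in the unit ball; it is
smooth on inner product spaces. Unlike `ContDiffBump`, it depends on the norm alone. -/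
noncomputable def radialBump (y : E) : ℝ :=
  Real.smoothTransition (2 * (1 - ‖y‖ ^ 2))

theorem radialBump_mem_Icc (y : E) : radialBump y ∈ Set.Icc 0 1 :=
  ⟨Real.smoothTransition.nonneg _, Real.smoothTransition.le_one _⟩

theorem radialBump_eq_of_norm_eq (x y : E) (hxy : ‖x‖ = ‖y‖) : radialBump x = radialBump y := by
  rw [radialBump, radialBump, hxy]

theorem radialBump_eq_one {y : E} (hy : ‖y‖ ≤ 2⁻¹) : radialBump y = 1 := by
  have : ‖y‖ ^ 2 ≤ 2⁻¹ ^ 2 := by gcongr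
  exact Real.smoothTransition.one_of_one_le (by linarith)

theorem radialBump_eq_zero {y : E} (hy : 1 ≤ ‖y‖) : radialBump y = 0 := by
  have : 1 ≤ ‖y‖ ^ 2 := one_le_pow₀ hy
  exact Real.smoothTransition.zero_of_nonpos (by linarith)

variable [InnerProductSpace ℝ E]

theorem contDiff_radialBump {m : ℕ∞} : ContDiff ℝ m (radialBump : E → ℝ) :=
  Real.smoothTransition.contDiff.comp (contDiff_const.mul (contDiff_const.sub (contDiff_norm_sq ℝ)))

-- `0` and `1` are extreme values of the bump, so it is critical wherever it takes one of them.
theorem norm_mem_Ioc_of_fderiv_radialBump_ne_zero {y : E} (hy : fderiv ℝ radialBump y ≠ 0) :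
    ‖y‖ ∈ Set.Ioc 2⁻¹ 1 := by
  constructor <;> by_contra! h
  · have hmax : IsLocalMax radialBump y := Eventually.of_forall fun z ↦ by
      simpa only [radialBump_eq_one h] using (radialBump_mem_Icc z).2
    exact hy hmax.fderiv_eq_zero
  · have hmin : IsLocalMin radialBump y := Eventually.of_forall fun z ↦ by
      simpa only [radialBump_eq_zero h.le] using (radialBump_mem_Icc z).1
    exact hy hmin.fderiv_eq_zero

theorem hasFDerivAt_radialBump (y : E) :
    HasFDerivAt radialBump
      (-(4 * deriv Real.smoothTransition (2 * (1 - ‖y‖ ^ 2))) • innerSL ℝ y) y := by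
  have hsmooth : Differentiable ℝ Real.smoothTransition :=
    Real.smoothTransition.contDiff.differentiable one_ne_zero
  have hinner := ((hasStrictFDerivAt_norm_sq y).hasFDerivAt.const_sub 1).const_mul 2
  refine ((hsmooth _).hasDerivAt.comp_hasFDerivAt y hinner).congr_fderiv ?_
  ext v
  simp only [smul_neg, neg_apply, smul_apply, coe_innerSL_apply, nsmul_eq_mul, Nat.cast_ofNat,
    smul_eq_mul, neg_smul, neg_inj]
  ring

theorem exists_enorm_fderiv_radialBump_le (E : Type*) [NormedAddCommGroup E]
    [InnerProductSpace ℝ E] : ∃ C : ℝ≥0, ∀ y : E, ‖fderiv ℝ radialBump y‖ₑ ≤ C := by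
  have hcont : Continuous (deriv Real.smoothTransition) :=
    Real.smoothTransition.contDiff.continuous_deriv_one
  obtain ⟨D, hD⟩ := (isCompact_Icc (a := (0 : ℝ)) (b := 2)).exists_bound_of_continuousOn
    hcont.continuousOn
  refine ⟨(4 * D).toNNReal, fun y ↦ ?_⟩
  rw [← ofReal_norm]
  refine ENNReal.ofReal_le_ofReal ?_
  have hD0 : 0 ≤ D := (norm_nonneg _).trans (hD 0 (by simp))
  by_cases hy : fderiv ℝ radialBump y = 0
  · rw [hy, norm_zero]
    positivity
  · have hy1 : ‖y‖ ≤ 1 := (norm_mem_Ioc_of_fderiv_radialBump_ne_zero hy).2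
    have hmem : 2 * (1 - ‖y‖ ^ 2) ∈ Set.Icc (0 : ℝ) 2 := by
      constructor <;> nlinarith [norm_nonneg y]
    calc ‖fderiv ℝ radialBump y‖
        = 4 * ‖deriv Real.smoothTransition (2 * (1 - ‖y‖ ^ 2))‖ * ‖y‖ := by
          rw [(hasFDerivAt_radialBump y).fderiv, norm_smul, innerSL_apply_norm, norm_neg, norm_mul,
            Real.norm_ofNat]
      _ ≤ 4 * D * 1 := by gcongr; exact hD _ hmem
      _ = 4 * D := mul_one _

/-- The logarithmic cutoff `χ_k`. The number of scales is the largest `N` with `2 ^ N ≤ 2 k`, so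
that the smallest one, `(2 ^ (N - 1) k)⁻¹`, is at least `1 / k ^ 2`. -/
noncomputable def logCutoff (k : ℕ) : E → ℝ :=
  dyadicAverage radialBump k (Nat.log 2 (2 * k))

theorem logCutoff_zero : (logCutoff 0 : E → ℝ) = 0 := by
  ext x
  simp [logCutoff, dyadicAverage]

theorem logCutoff_eq_one {k : ℕ} {x : E} (hx : ‖x‖ < 1 / (2 * (k : ℝ) ^ 2)) :
    logCutoff k x = 1 := by
  have hk : k ≠ 0 := by
    rintro rfl
    simp [(norm_nonneg x).not_gt] at hx
  have hpow : (2 : ℝ) ^ Nat.log 2 (2 * k) ≤ 2 * k := by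
    exact_mod_cast Nat.pow_log_le_self 2 (by positivity)
  refine dyadicAverage_eq_one (fun y ↦ radialBump_eq_one) k.cast_nonneg
    (Nat.log_pos one_lt_two (by lia)).ne' ?_
  calc (2 : ℝ) ^ Nat.log 2 (2 * k) * k * ‖x‖ ≤ 2 * k * k * (1 / (2 * (k : ℝ) ^ 2)) := by gcongr
    _ = 1 := by field_simp

theorem logCutoff_eq_zero {k : ℕ} {x : E} (hx : 1 / (k : ℝ) < ‖x‖) : logCutoff k x = 0 := by
  rcases k.eq_zero_or_pos with rfl | hk
  · rw [logCutoff_zero, Pi.zero_apply]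
  · exact dyadicAverage_eq_zero (fun y ↦ radialBump_eq_zero)
      ((div_le_iff₀' (by positivity)).1 hx.le)

theorem lintegral_enorm_fderiv_logCutoff_sq_le [MeasurableSpace E] [OpensMeasurableSpace E]
    {μ : Measure E} {A : ℝ≥0∞} {C : ℝ≥0} (hC : ∀ y : E, ‖fderiv ℝ radialBump y‖ₑ ≤ C)
    (hμ : ∀ ρ : ℝ, 0 < ρ → ρ ≤ 1 → μ {x | 0 < ‖x‖ ∧ ‖x‖ ≤ ρ} ≤ A * ENNReal.ofReal (ρ ^ 2))
    (k : ℕ) :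
    ∫⁻ x, ‖fderiv ℝ (logCutoff k) x‖ₑ ^ 2 ∂μ
      ≤ A * C ^ 2 * ENNReal.ofReal (Nat.log 2 (2 * k) : ℝ)⁻¹ := by
  rcases k.eq_zero_or_pos with rfl | hk
  · simp [logCutoff_zero, enorm_eq_nnnorm]
  · exact lintegral_enorm_fderiv_dyadicAverage_sq_le contDiff_radialBump (by exact_mod_cast hk)
      (fun y ↦ norm_mem_Ioc_of_fderiv_radialBump_ne_zero) hC hμ

theorem tendsto_inv_natLog_two_mul_atTop :
    Tendsto (fun k : ℕ ↦ (Nat.log 2 (2 * k) : ℝ)⁻¹) atTop (nhds 0) := by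
  have hlog : Tendsto (fun k ↦ Nat.log 2 (2 * k)) atTop atTop :=
    tendsto_atTop.2 fun b ↦ (eventually_ge_atTop (2 ^ b)).mono fun k hk ↦
      Nat.le_log_of_pow_le one_lt_two (by lia)
  exact tendsto_inv_atTop_zero.comp (tendsto_natCast_atTop_atTop.comp hlog)

end LogCutoff

theorem log_cutoff_lemma_general (E : Type*) [NormedAddCommGroup E] [InnerProductSpace ℝ E]
    [MeasurableSpace E] [OpensMeasurableSpace E] :
    ∃ (χ : ℕ → E → ℝ) (c : ℕ → ℝ),
      (∀ k, ContDiff ℝ (⊤ : ℕ∞) (χ k)) ∧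
      (∀ k x, 0 ≤ χ k x ∧ χ k x ≤ 1) ∧
      (∀ k x y, ‖x‖ = ‖y‖ → χ k x = χ k y) ∧
      (∀ (k : ℕ) x, ‖x‖ < 1 / (2 * (k : ℝ) ^ 2) → χ k x = 1) ∧
      (∀ (k : ℕ) x, 1 / (k : ℝ) < ‖x‖ → χ k x = 0) ∧
      Tendsto c atTop (nhds 0) ∧
      (∀ (c' : ℝ) (μ : Measure E),
        (∀ ρ : ℝ, 0 < ρ → ρ ≤ 1 →
          μ {x : E | 0 < ‖x‖ ∧ ‖x‖ ≤ ρ} ≤ ENNReal.ofReal (c' * ρ ^ 2)) →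
        ∀ k, ∫⁻ x, ENNReal.ofReal (‖fderiv ℝ (χ k) x‖ ^ 2) ∂μ ≤ ENNReal.ofReal (c' * c k)) := by
  obtain ⟨C, hC⟩ := exists_enorm_fderiv_radialBump_le E
  refine ⟨logCutoff, fun k ↦ C ^ 2 * (Nat.log 2 (2 * k) : ℝ)⁻¹,
    fun k ↦ contDiff_dyadicAverage contDiff_radialBump,
    fun k ↦ dyadicAverage_mem_Icc radialBump_mem_Icc,
    fun k x y ↦ dyadicAverage_eq_of_norm_eq radialBump_eq_of_norm_eq,
    fun k x ↦ logCutoff_eq_one, fun k x ↦ logCutoff_eq_zero,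
    by simpa only [mul_zero] using tendsto_inv_natLog_two_mul_atTop.const_mul ((C : ℝ) ^ 2),
    fun c' μ hμ k ↦ ?_⟩
  have henergy := lintegral_enorm_fderiv_logCutoff_sq_le (A := ENNReal.ofReal c') hC
    (fun ρ h0 h1 ↦ by rw [← ENNReal.ofReal_mul' (sq_nonneg ρ)]; exact hμ ρ h0 h1) k
  simp_rw [ENNReal.ofReal_pow (norm_nonneg _), ofReal_norm]
  rwa [ENNReal.ofReal_mul' (by positivity), ENNReal.ofReal_mul (by positivity),
    ENNReal.ofReal_pow C.coe_nonneg, ENNReal.ofReal_coe_nnreal, ← mul_assoc]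

/-- The logarithmic-cutoff lemma: for `n ≥ 2` there are smooth radial cutoff functions
`χ_k` on `ℝ^{n+1}`, equal to `1` on `{‖x‖ < 1/(2k²)}` and to `0` on `{‖x‖ > 1/k}`, and
constants `c_k → 0`, such that for any measure `μ` with `μ {0 < ‖x‖ ≤ ρ} ≤ c ρⁿ` for all
`0 < ρ ≤ 1` one has `∫ |∇χ_k|² dμ ≤ c · c_k`. -/
theorem log_cutoff_lemma (n : ℕ) (hn : 2 ≤ n) :
    ∃ (χ : ℕ → EuclideanSpace ℝ (Fin (n + 1)) → ℝ) (c : ℕ → ℝ),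
      (∀ k, ContDiff ℝ (⊤ : ℕ∞) (χ k)) ∧
      (∀ k x, 0 ≤ χ k x ∧ χ k x ≤ 1) ∧
      (∀ k x y, ‖x‖ = ‖y‖ → χ k x = χ k y) ∧
      (∀ (k : ℕ) x, ‖x‖ < 1 / (2 * (k : ℝ) ^ 2) → χ k x = 1) ∧
      (∀ (k : ℕ) x, 1 / (k : ℝ) < ‖x‖ → χ k x = 0) ∧
      Tendsto c atTop (nhds 0) ∧
      (∀ c' : ℝ, 0 < c' → ∀ μ : Measure (EuclideanSpace ℝ (Fin (n + 1))),
        (∀ ρ : ℝ, 0 < ρ → ρ ≤ 1 →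
          μ {x : EuclideanSpace ℝ (Fin (n + 1)) | 0 < ‖x‖ ∧ ‖x‖ ≤ ρ}
            ≤ ENNReal.ofReal (c' * ρ ^ n)) →
        ∀ k, ∫⁻ x, ENNReal.ofReal (‖fderiv ℝ (χ k) x‖ ^ 2) ∂μ
          ≤ ENNReal.ofReal (c' * c k)) := by
  obtain ⟨χ, c, hsmooth, hmem, hradial, hone, hzero, hc, henergy⟩ :=
    log_cutoff_lemma_general (EuclideanSpace ℝ (Fin (n + 1)))
  refine ⟨χ, c, hsmooth, hmem, hradial, hone, hzero, hc, fun c' hc' μ hμ ↦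
    henergy c' μ fun ρ h0 h1 ↦ (hμ ρ h0 h1).trans (ENNReal.ofReal_le_ofReal ?_)⟩
  exact mul_le_mul_of_nonneg_left (pow_le_pow_of_le_one h0.le h1 hn) hc'.le
end

section
/- Let V₀ > 0 and let A : (V₀, ∞) → (0, ∞) be a differentiable function such that A′(V) > 0 and A′(V)²·A(V) ≥ 16π for every V > V₀, and such that A(V) → ∞ as V → ∞. Then limsup_{V → ∞} (2/A(V))·(V − A(V)^{3/2}/(6√π)) ≤ 0. -/
open Filter

/-!
The deficit `V ↦ V - A(V)^{3/2}/(6√π)` has derivative `1 - A'(V)√A(V)/(4√π)`, and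
`A'(V)² A(V) ≥ 16π` with `A' ≥ 0` says exactly that this is nonpositive. A nonincreasing deficit is
bounded above near infinity, so multiplying it by `2/A(V) → 0` leaves nothing positive in the limit.
-/

open Set
open scoped Topology

section EventualBounds

variable {α : Type*} {l : Filter α}

theorem limsup_le_of_forall_gt_eventually_lt {f : α → ℝ} {a : ℝ} (ha : 0 ≤ a)
    (h : ∀ b, a < b → ∀ᶠ x in l, f x < b) : limsup f l ≤ a := by
  by_cases hf : l.IsCoboundedUnder (· ≤ ·) f
  · exact le_of_forall_gt_imp_ge_of_dense fun b hb ↦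
      limsup_le_of_le hf ((h b hb).mono fun _ ↦ le_of_lt)
  · -- A real `limsup` whose true value is `-∞` takes the junk value `0`, whence `0 ≤ a`.
    exact (Real.limsup_of_not_isCoboundedUnder hf).trans_le ha

theorem eventually_mul_lt_of_tendsto_zero_of_isBoundedUnder_le {w f : α → ℝ}
    (hw : Tendsto w l (𝓝 0)) (hw_nonneg : 0 ≤ᶠ[l] w) (hf : l.IsBoundedUnder (· ≤ ·) f)
    {ε : ℝ} (hε : 0 < ε) : ∀ᶠ x in l, w x * f x < ε := by
  obtain ⟨b, hb⟩ := hf.eventually_le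
  have hwb : Tendsto (fun x ↦ w x * b) l (𝓝 0) := by simpa only [zero_mul] using hw.mul_const b
  filter_upwards [hw_nonneg, hb, hwb.eventually_lt_const hε] with x hwx hfx hlt
  exact (mul_le_mul_of_nonneg_left hfx hwx).trans_lt hlt

end EventualBounds

theorem isBoundedUnder_le_atTop_of_antitoneOn_Ioi {α β : Type*} [Preorder α] [NoMaxOrder α]
    [Preorder β] {f : α → β} {a : α} (hf : AntitoneOn f (Ioi a)) :
    atTop.IsBoundedUnder (· ≤ ·) f := by
  obtain ⟨b, hb⟩ := exists_gt a
  refine isBoundedUnder_of_eventually_le (a := f b) ?_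
  filter_upwards [eventually_ge_atTop b] with x hx
  exact hf hb (hb.trans_le hx) hx

theorem sqrt_le_mul_sqrt_of_le_sq_mul {a b c : ℝ} (ha : 0 ≤ a) (h : c ≤ a ^ 2 * b) :
    √c ≤ a * √b :=
  calc √c ≤ √(a ^ 2 * b) := Real.sqrt_le_sqrt h
    _ = a * √b := by rw [Real.sqrt_mul (sq_nonneg a), Real.sqrt_sq ha]

/-- The isoperimetric deficit, relative to Euclidean 3-space, of enclosing volume `V` by area `A V`:
a Euclidean ball of boundary area `S` has volume `S ^ (3 / 2) / (6 * √π)`. It is not normalized by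
the factor `2 / A V`. -/
noncomputable def isoperimetricDeficit (A : ℝ → ℝ) (V : ℝ) : ℝ :=
  V - A V ^ (3 / 2 : ℝ) / (6 * √Real.pi)

section IsoperimetricDeficit

variable {A : ℝ → ℝ}

theorem hasDerivAt_isoperimetricDeficit {A' V : ℝ} (hA : HasDerivAt A A' V) :
    HasDerivAt (isoperimetricDeficit A) (1 - A' * √(A V) / (4 * √Real.pi)) V := by
  have hrpow : HasDerivAt (fun x ↦ A x ^ (3 / 2 : ℝ)) (A' * (3 / 2) * √(A V)) V := by
    refine (hA.rpow_const (Or.inr (by norm_num))).congr_deriv ?_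
    rw [Real.sqrt_eq_rpow]
    norm_num
  refine ((hasDerivAt_id V).sub (hrpow.div_const (6 * √Real.pi))).congr_deriv ?_
  ring

theorem antitoneOn_isoperimetricDeficit {A' : ℝ → ℝ} {s : Set ℝ} (hs : Convex ℝ s)
    (hA : ContinuousOn A s) (hderiv : ∀ V ∈ interior s, HasDerivAt A (A' V) V)
    (hA' : ∀ V ∈ interior s, 0 ≤ A' V)
    (h16π : ∀ V ∈ interior s, 16 * Real.pi ≤ A' V ^ 2 * A V) :
    AntitoneOn (isoperimetricDeficit A) s := by
  have hcont : ContinuousOn (isoperimetricDeficit A) s :=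
    continuousOn_id.sub ((hA.rpow_const fun _ _ ↦ Or.inr (by norm_num)).div_const _)
  refine antitoneOn_of_hasDerivWithinAt_nonpos hs hcont
    (fun V hV ↦ (hasDerivAt_isoperimetricDeficit (hderiv V hV)).hasDerivWithinAt) fun V hV ↦ ?_
  have hsqrt : √(16 * Real.pi) = 4 * √Real.pi := by
    rw [Real.sqrt_mul (by norm_num), show (16 : ℝ) = 4 ^ 2 by norm_num,
      Real.sqrt_sq (by norm_num)]
  have hle : 4 * √Real.pi ≤ A' V * √(A V) :=
    hsqrt ▸ sqrt_le_mul_sqrt_of_le_sq_mul (hA' V hV) (h16π V hV)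
  have hpos : 0 < 4 * √Real.pi := by positivity
  exact sub_nonpos.2 ((one_le_div hpos).2 hle)

end IsoperimetricDeficit

/-- If the (isoperimetric-profile–like) function `A` is differentiable on `(V₀, ∞)`,
positive there, with `A' > 0` and `A'(V)² A(V) ≥ 16π`, and `A(V) → ∞`, then the
normalized isoperimetric deficit `(2/A(V)) (V - A(V)^{3/2}/(6√π))` has nonpositive
`limsup` as `V → ∞`. -/
theorem limsup_isoperimetric_deficit_nonpos
    (V₀ : ℝ) (hV₀ : 0 < V₀) (A : ℝ → ℝ)
    (hApos : ∀ V, V₀ < V → 0 < A V)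
    (hdiff : ∀ V, V₀ < V → DifferentiableAt ℝ A V)
    (hA' : ∀ V, V₀ < V → 0 < deriv A V)
    (h16π : ∀ V, V₀ < V → 16 * Real.pi ≤ (deriv A V) ^ 2 * A V)
    (htop : Tendsto A atTop atTop) :
    limsup (fun V : ℝ =>
        (2 / A V) * (V - (A V) ^ ((3 : ℝ) / 2) / (6 * Real.sqrt Real.pi))) atTop ≤ 0 := by
  have hcont : ContinuousOn A (Ioi V₀) := fun V hV ↦
    (hdiff V hV).continuousAt.continuousWithinAt
  have hanti : AntitoneOn (isoperimetricDeficit A) (Ioi V₀) := by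
    apply antitoneOn_isoperimetricDeficit (A' := deriv A) (convex_Ioi V₀) hcont <;>
      rw [interior_Ioi]
    exacts [fun V hV ↦ (hdiff V hV).hasDerivAt, fun V hV ↦ (hA' V hV).le, h16π]
  have hweight : 0 ≤ᶠ[atTop] fun V ↦ 2 / A V := by
    filter_upwards [eventually_gt_atTop V₀] with V hV
    exact (div_pos two_pos (hApos V hV)).le
  exact limsup_le_of_forall_gt_eventually_lt le_rfl fun _ hε ↦
    eventually_mul_lt_of_tendsto_zero_of_isBoundedUnder_le (htop.const_div_atTop 2) hweight
      (isBoundedUnder_le_atTop_of_antitoneOn_Ioi hanti) hε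
end

section
/- For every m₀ > 0 there is a constant C > 0 with the following property. For every m ∈ (0, m₀] and every r ≥ max(1, m), set A = 4πr²(1 + m/(2r))⁴ and V = 4π∫_{m/2}^{r} (1 + m/(2s))⁶ s² ds. Then |V − A^{3/2}/(6√π) − (m/2)·A| ≤ C·√A. -/
open MeasureTheory intervalIntegral

/-! In terms of the area radius `ρ = r (1 + m/(2r))²` one has `A = 4πρ²`, so `A^{3/2}/(6√π)` is the
volume `4πρ³/3` of the Euclidean ball of the same area. Integrating `V` in closed form, the terms of
order `r³` and `m r²` in `V - 4πρ³/3 - (m/2) 4πρ²` cancel, and what is left is `π m² r` times a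
function of `t = m/(2r)` alone. Its only non-polynomial term is a multiple of `-t log t`, so that it
is bounded on `(0, 1]`, that is, all the way down to the horizon. -/

section

open Real

theorem integral_one_add_div_pow_six_mul_sq {a b : ℝ} (c : ℝ) (h : (0 : ℝ) ∉ Set.uIcc a b) :
    ∫ s in a..b, (1 + c / s) ^ 6 * s ^ 2
      = (b ^ 3 - a ^ 3) / 3 + 3 * c * (b ^ 2 - a ^ 2) + 15 * c ^ 2 * (b - a)
        + 20 * c ^ 3 * log (b / a) - 15 * c ^ 4 * (b⁻¹ - a⁻¹)
        - 3 * c ^ 5 * (b⁻¹ ^ 2 - a⁻¹ ^ 2) - c ^ 6 / 3 * (b⁻¹ ^ 3 - a⁻¹ ^ 3) := by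
  have ne_zero : ∀ s ∈ Set.uIcc a b, s ≠ 0 := fun s hs h0 ↦ h (h0 ▸ hs)
  have primitive : ∀ s ∈ Set.uIcc a b,
      HasDerivAt (fun s ↦ s ^ 3 / 3 + 3 * c * s ^ 2 + 15 * c ^ 2 * s + 20 * c ^ 3 * log s
        - 15 * c ^ 4 * s⁻¹ - 3 * c ^ 5 * s⁻¹ ^ 2 - c ^ 6 / 3 * s⁻¹ ^ 3)
        ((1 + c / s) ^ 6 * s ^ 2) s := by
    intro s hs
    have hs0 := ne_zero s hs
    have hid := hasDerivAt_id' s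
    have hinv := hasDerivAt_inv hs0
    refine (((((((hid.pow 3).div_const 3).add ((hid.pow 2).const_mul (3 * c))).add
      (hid.const_mul (15 * c ^ 2))).add ((hasDerivAt_log hs0).const_mul (20 * c ^ 3))).sub
      (hinv.const_mul (15 * c ^ 4))).sub ((hinv.pow 2).const_mul (3 * c ^ 5))).sub
      ((hinv.pow 3).const_mul (c ^ 6 / 3)) |>.congr_deriv ?_
    push_cast
    field_simp
    ring
  have integrable : IntervalIntegrable (fun s ↦ (1 + c / s) ^ 6 * s ^ 2) volume a b := by
    apply ContinuousOn.intervalIntegrable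
    fun_prop (disch := assumption)
  rw [integral_eq_sub_of_hasDerivAt primitive integrable,
    log_div (ne_zero b Set.right_mem_uIcc) (ne_zero a Set.left_mem_uIcc)]
  ring

theorem sqrt_four_pi_mul_sq {ρ : ℝ} (hρ : 0 ≤ ρ) : √(4 * π * ρ ^ 2) = 2 * √π * ρ := by
  rw [sqrt_eq_iff_eq_sq (by positivity) (by positivity), mul_pow, mul_pow, sq_sqrt pi_nonneg]
  norm_num

theorem four_pi_mul_sq_rpow_div {ρ : ℝ} (hρ : 0 ≤ ρ) :
    (4 * π * ρ ^ 2) ^ (3 / 2 : ℝ) / (6 * √π) = 4 * π / 3 * ρ ^ 3 := by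
  have hpow : (4 * π * ρ ^ 2) ^ (3 / 2 : ℝ) = (2 * √π * ρ) ^ 3 := by
    rw [← sqrt_four_pi_mul_sq hρ, rpow_div_two_eq_sqrt _ (by positivity)]
    norm_cast
  rw [hpow, div_eq_iff (by positivity)]
  linear_combination 8 * √π * ρ ^ 3 * sq_sqrt pi_nonneg

/-- The area of the centered coordinate sphere of radius `r` in the Schwarzschild manifold of
mass `m`. -/
noncomputable def schwarzschildArea (m r : ℝ) : ℝ :=
  4 * π * r ^ 2 * (1 + m / (2 * r)) ^ 4

/-- The Schwarzschild volume enclosed between the horizon, the coordinate sphere of radius `m / 2`,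
and the centered coordinate sphere of radius `r`. -/
noncomputable def schwarzschildVolume (m r : ℝ) : ℝ :=
  4 * π * ∫ s in (m / 2)..r, (1 + m / (2 * s)) ^ 6 * s ^ 2

/-- The area radius of the centered coordinate sphere of radius `r` in the Schwarzschild manifold of
mass `m`: the radius of the Euclidean sphere of the same area. -/
noncomputable def schwarzschildAreaRadius (m r : ℝ) : ℝ :=
  r * (1 + m / (2 * r)) ^ 2

/-- The error of the two-term expansion of the Schwarzschild volume in terms of the area, divided by
`π m² r` and written as a function of `t = m / (2 r)`. -/
noncomputable def schwarzschildRemainder (t : ℝ) : ℝ :=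
  6 + 20 * negMulLog t - 38 / 3 * t - 24 * t ^ 2 - 6 * t ^ 3 - 2 / 3 * t ^ 4

theorem schwarzschildAreaRadius_nonneg (m : ℝ) {r : ℝ} (hr : 0 ≤ r) :
    0 ≤ schwarzschildAreaRadius m r :=
  mul_nonneg hr (sq_nonneg _)

theorem schwarzschildArea_eq (m r : ℝ) :
    schwarzschildArea m r = 4 * π * schwarzschildAreaRadius m r ^ 2 := by
  unfold schwarzschildArea schwarzschildAreaRadius
  ring

theorem schwarzschildVolume_eq {m r : ℝ} (hm : 0 < m) (hr : m / 2 ≤ r) :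
    schwarzschildVolume m r = 4 * π * (r ^ 3 / 3 + 3 / 2 * m * r ^ 2 + 15 / 4 * m ^ 2 * r
      + 5 / 2 * m ^ 3 * log (2 * r / m) - 15 / 16 * m ^ 4 / r - 3 / 32 * m ^ 5 / r ^ 2
      - m ^ 6 / 192 / r ^ 3) := by
  have zero_notMem : (0 : ℝ) ∉ Set.uIcc (m / 2) r := by
    rw [Set.uIcc_of_le hr]
    exact fun h ↦ (half_pos hm).not_ge h.1
  have div_two_mul (s : ℝ) : m / (2 * s) = m / 2 / s := by rw [div_div]
  have log_arg : r / (m / 2) = 2 * r / m := by rw [div_div_eq_mul_div, mul_comm]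
  simp only [schwarzschildVolume, div_two_mul,
    integral_one_add_div_pow_six_mul_sq (m / 2) zero_notMem, log_arg]
  field_simp
  ring

theorem schwarzschildVolume_sub_eq {m r : ℝ} (hm : 0 < m) (hr : m / 2 ≤ r) :
    schwarzschildVolume m r - 4 * π / 3 * schwarzschildAreaRadius m r ^ 3
        - m / 2 * (4 * π * schwarzschildAreaRadius m r ^ 2)
      = π * m ^ 2 * r * schwarzschildRemainder (m / (2 * r)) := by
  have hr0 : 0 < r := (half_pos hm).trans_le hr
  have hlog : log (m / (2 * r)) = -log (2 * r / m) := by rw [← log_inv, inv_div]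
  rw [schwarzschildVolume_eq hm hr, schwarzschildAreaRadius, schwarzschildRemainder, negMulLog,
    hlog]
  field_simp
  ring

theorem abs_schwarzschildRemainder_le {t : ℝ} (ht₀ : 0 ≤ t) (ht₁ : t ≤ 1) :
    |schwarzschildRemainder t| ≤ 26 * (1 + t) ^ 2 := by
  have hlog₀ : 0 ≤ negMulLog t := negMulLog_nonneg ht₀ ht₁
  have hlog₁ : negMulLog t ≤ 1 - t := negMulLog_le_one_sub_self ht₀
  have h₃ : t ^ 3 ≤ t := pow_le_of_le_one ht₀ ht₁ three_ne_zero
  have h₄ : t ^ 4 ≤ t := pow_le_of_le_one ht₀ ht₁ four_ne_zero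
  have h₂ : 0 ≤ t ^ 2 := by positivity
  have h₃' : 0 ≤ t ^ 3 := by positivity
  have h₄' : 0 ≤ t ^ 4 := by positivity
  rw [schwarzschildRemainder, abs_le]
  constructor <;> linarith

theorem schwarzschild_profile_expansion_general {m r : ℝ} (hm : 0 < m) (hr : m / 2 ≤ r) :
    |schwarzschildVolume m r - schwarzschildArea m r ^ (3 / 2 : ℝ) / (6 * √π)
        - m / 2 * schwarzschildArea m r|
      ≤ 13 * √π * m ^ 2 * √(schwarzschildArea m r) := by
  have hr0 : 0 < r := (half_pos hm).trans_le hr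
  have hρ := schwarzschildAreaRadius_nonneg m hr0.le
  have ht : m / (2 * r) ≤ 1 := (div_le_one (by positivity)).2 (by linarith)
  rw [schwarzschildArea_eq, four_pi_mul_sq_rpow_div hρ, sqrt_four_pi_mul_sq hρ,
    schwarzschildVolume_sub_eq hm hr, abs_mul, abs_of_nonneg (by positivity)]
  calc π * m ^ 2 * r * |schwarzschildRemainder (m / (2 * r))|
      ≤ π * m ^ 2 * r * (26 * (1 + m / (2 * r)) ^ 2) := by
        gcongr
        exact abs_schwarzschildRemainder_le (by positivity) ht
    _ = 26 * √π ^ 2 * m ^ 2 * schwarzschildAreaRadius m r := by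
        rw [sq_sqrt pi_nonneg, schwarzschildAreaRadius]
        ring
    _ = 13 * √π * m ^ 2 * (2 * √π * schwarzschildAreaRadius m r) := by ring

end

/-- Uniform expansion of the inverse Schwarzschild isoperimetric profile: for masses
`0 < m ≤ m₀` and radii `r ≥ max 1 m`, with `A = 4πr²(1 + m/(2r))⁴` the area of the
centered coordinate sphere and `V = 4π ∫_{m/2}^r (1 + m/(2s))⁶ s² ds` the enclosed
Schwarzschild volume, one has `|V - A^{3/2}/(6√π) - (m/2) A| ≤ C √A` with `C = C(m₀)`. -/
theorem schwarzschild_profile_expansion (m₀ : ℝ) (hm₀ : 0 < m₀) :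
    ∃ C : ℝ, 0 < C ∧ ∀ m r : ℝ, 0 < m → m ≤ m₀ → max 1 m ≤ r →
      |(4 * Real.pi * ∫ s in (m / 2)..r, (1 + m / (2 * s)) ^ 6 * s ^ 2)
          - (4 * Real.pi * r ^ 2 * (1 + m / (2 * r)) ^ 4) ^ ((3 : ℝ) / 2)
              / (6 * Real.sqrt Real.pi)
          - (m / 2) * (4 * Real.pi * r ^ 2 * (1 + m / (2 * r)) ^ 4)|
        ≤ C * Real.sqrt (4 * Real.pi * r ^ 2 * (1 + m / (2 * r)) ^ 4) := by
  refine ⟨13 * Real.sqrt Real.pi * m₀ ^ 2, by positivity, fun m r hm hmm₀ hr ↦ ?_⟩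
  have hr' : m / 2 ≤ r := by linarith [(le_max_right 1 m).trans hr]
  exact (schwarzschild_profile_expansion_general hm hr').trans (by unfold schwarzschildArea; gcongr)
end

section
/- Let (a_k) be a sequence in ℝ³ and (ρ_k) a sequence of reals with ρ_k > 1 for all k, ρ_k → ∞, and |a_k| − ρ_k → ∞ as k → ∞. Then lim_{k → ∞} ρ_k^{-2} · ∫_1^{ρ_k} t · ( ∫_{S_t(a_k)} |x|^{-3} dH²(x) ) dt = 0. -/
open MeasureTheory Filter

/-!
Outside a ball of radius `t`, the radial projection onto its boundary sphere `S` is `1`-Lipschitz.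
Moving a point of `S ∩ B(y, s)` along the outward normal of `S` until it leaves `B(y, s)` shows that
`S ∩ B(y, s)` lies in the radial projection of `∂B(y, s)`. Hence `H^d(S ∩ B(y, s)) ≤ s^d H^d(S_1)`,
whatever the radius and centre of `S`, and `H^d(S_1)` is finite because the unit sphere is covered
by radial projections of balls in finitely many tangent hyperplanes. By the layer-cake formula this
growth bound makes the integral of `‖x‖^(-p)` over a sphere at distance `m` from the origin at most
a constant multiple of `m^(d - p)`, and averaging over the radii preserves the bound.
-/

open Metric Module Set
open scoped ENNReal RealInnerProductSpace

section RadialProjection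

variable {E : Type*} [NormedAddCommGroup E]

/-- The radial projection from `c` onto the sphere of centre `c` and radius `t`; the centre, where
no direction is available, is sent to itself. -/
noncomputable def radialProj [NormedSpace ℝ E] (c : E) (t : ℝ) (x : E) : E :=
  c + t • NormedSpace.normalize (x - c)

lemma radialProj_add_smul_sub [NormedSpace ℝ E] {c x : E} {t r : ℝ} (hx : x ∈ sphere c t)
    (hr : 0 < r) : radialProj c t (c + r • (x - c)) = x := by
  rw [radialProj, add_sub_cancel_left, NormedSpace.normalize_smul_of_pos hr,
    ← mem_sphere_iff_norm.1 hx, NormedSpace.norm_smul_normalize, add_sub_cancel]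

lemma exists_nonneg_add_smul_mem_sphere [NormedSpace ℝ E] {x y v : E} {s : ℝ} (hv : v ≠ 0)
    (hx : x ∈ closedBall y s) : ∃ r : ℝ, 0 ≤ r ∧ x + r • v ∈ sphere y s := by
  have hs : 0 ≤ s := dist_nonneg.trans hx
  set R : ℝ := (s + dist x y) / ‖v‖
  have hR : 0 ≤ R := by positivity
  have hstart : dist (x + (0 : ℝ) • v) y ≤ s := by simpa using hx
  have hend : s ≤ dist (x + R • v) y := by
    have htravel : dist (x + R • v) x = s + dist x y := by
      rw [dist_self_add_left, norm_smul, Real.norm_of_nonneg hR,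
        div_mul_cancel₀ _ (norm_ne_zero_iff.2 hv)]
    linarith [dist_triangle (x + R • v) y x, dist_comm x y]
  have hcont : Continuous fun r : ℝ => dist (x + r • v) y := by fun_prop
  obtain ⟨r, hr, hrs⟩ := intermediate_value_Icc hR hcont.continuousOn ⟨hstart, hend⟩
  exact ⟨r, hr.1, hrs⟩

lemma sphere_inter_closedBall_subset_image_radialProj [NormedSpace ℝ E] {c y : E} {t s : ℝ}
    (ht : 0 < t) :
    sphere c t ∩ closedBall y s ⊆ radialProj c t '' (sphere y s ∩ {x | t ≤ ‖x - c‖}) := by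
  rintro x ⟨hxc, hxy⟩
  have hnorm : ‖x - c‖ = t := mem_sphere_iff_norm.1 hxc
  have hne : x - c ≠ 0 := norm_pos_iff.1 (hnorm ▸ ht)
  obtain ⟨r, hr, hrs⟩ := exists_nonneg_add_smul_mem_sphere hne hxy
  have hmove : x + r • (x - c) = c + (1 + r) • (x - c) := by module
  rw [hmove] at hrs
  have hr' : 0 < 1 + r := by positivity
  refine ⟨_, ⟨hrs, ?_⟩, radialProj_add_smul_sub hxc hr'⟩
  rw [mem_ofPred_eq, add_sub_cancel_left, norm_smul, hnorm, Real.norm_of_nonneg hr'.le]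
  nlinarith

lemma norm_smul_sub_smul_le_of_norm_eq_one [InnerProductSpace ℝ E] {u v : E} (hu : ‖u‖ = 1)
    (hv : ‖v‖ = 1) {t α β : ℝ} (ht : 0 ≤ t) (hα : t ≤ α) (hβ : t ≤ β) :
    ‖t • u - t • v‖ ≤ ‖α • u - β • v‖ := by
  have hexpand (α β : ℝ) : ‖α • u - β • v‖ ^ 2 = (α - β) ^ 2 + 2 * (α * β) * (1 - ⟪u, v⟫) := by
    rw [norm_sub_sq_real, norm_smul, norm_smul, real_inner_smul_left, real_inner_smul_right,
      hu, hv, mul_one, mul_one, Real.norm_eq_abs, Real.norm_eq_abs, sq_abs, sq_abs]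
    ring
  have hinner : 0 ≤ 1 - ⟪u, v⟫ := by
    have := real_inner_le_norm u v
    rw [hu, hv] at this
    linarith
  refine le_of_sq_le_sq ?_ (norm_nonneg _)
  have hradii : t * t ≤ α * β := mul_le_mul hα hβ ht (ht.trans hα)
  rw [hexpand, hexpand, sub_self, zero_pow two_ne_zero]
  gcongr
  exact sq_nonneg _

lemma lipschitzOnWith_radialProj [InnerProductSpace ℝ E] (c : E) {t : ℝ} (ht : 0 < t) :
    LipschitzOnWith 1 (radialProj c t) {x | t ≤ ‖x - c‖} := by
  refine LipschitzOnWith.of_dist_le_mul fun x hx y hy => ?_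
  have hnorm {z : E} (hz : t ≤ ‖z - c‖) : ‖NormedSpace.normalize (z - c)‖ = 1 :=
    NormedSpace.norm_normalize (norm_pos_iff.1 (ht.trans_le hz))
  calc dist (radialProj c t x) (radialProj c t y)
      = ‖t • NormedSpace.normalize (x - c) - t • NormedSpace.normalize (y - c)‖ := by
        rw [radialProj, radialProj, dist_add_left, dist_eq_norm]
    _ ≤ ‖‖x - c‖ • NormedSpace.normalize (x - c) - ‖y - c‖ • NormedSpace.normalize (y - c)‖ :=
        norm_smul_sub_smul_le_of_norm_eq_one (hnorm hx) (hnorm hy) ht.le hx hy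
    _ = (1 : NNReal) * dist x y := by
        rw [NormedSpace.norm_smul_normalize, NormedSpace.norm_smul_normalize,
          sub_sub_sub_cancel_right, NNReal.coe_one, one_mul, dist_eq_norm]

lemma one_le_norm_add_of_mem_orthogonal [InnerProductSpace ℝ E] {v h : E} (hv : ‖v‖ = 1)
    (hh : h ∈ (ℝ ∙ v)ᗮ) : 1 ≤ ‖v + h‖ := by
  have hinner := real_inner_le_norm v (v + h)
  rwa [inner_add_right, Submodule.mem_orthogonal_singleton_iff_inner_right.1 hh,
    real_inner_self_eq_norm_sq, hv, one_pow, add_zero, one_mul] at hinner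

lemma cap_subset_image_radialProj [InnerProductSpace ℝ E] {v : E} (hv : ‖v‖ = 1) :
    sphere (0 : E) 1 ∩ {x | 1 / 2 < ⟪v, x⟫} ⊆
      radialProj 0 1 '' ((fun h : (ℝ ∙ v)ᗮ => v + (h : E)) '' closedBall 0 3) := by
  rintro x ⟨hx, hvx : 1 / 2 < ⟪v, x⟫⟩
  have hpos : 0 < ⟪v, x⟫ := one_half_pos.trans hvx
  have hinv : ⟪v, x⟫⁻¹ ≤ 2 := inv_le_of_inv_le₀ two_pos (by linarith)
  have horth : ⟪v, x⟫⁻¹ • x - v ∈ (ℝ ∙ v)ᗮ := by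
    rw [Submodule.mem_orthogonal_singleton_iff_inner_right, inner_sub_right, inner_smul_right,
      real_inner_self_eq_norm_sq, hv, inv_mul_cancel₀ hpos.ne', one_pow, sub_self]
  have hnorm : ‖⟪v, x⟫⁻¹ • x - v‖ ≤ 3 := by
    refine (norm_sub_le _ _).trans ?_
    rw [norm_smul, mem_sphere_zero_iff_norm.1 hx, hv, Real.norm_of_nonneg (by positivity)]
    linarith
  refine ⟨⟪v, x⟫⁻¹ • x, ⟨⟨_, horth⟩, mem_closedBall_zero_iff.2 hnorm, add_sub_cancel _ _⟩, ?_⟩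
  simpa using radialProj_add_smul_sub hx (inv_pos.2 hpos)

end RadialProjection

section SphereMeasure

variable {E : Type*} [NormedAddCommGroup E] [InnerProductSpace ℝ E] [MeasurableSpace E]
  [BorelSpace E]

lemma hausdorffMeasure_image_radialProj_le {d : ℝ} (hd : 0 ≤ d) (c : E) {t : ℝ} (ht : 0 < t)
    {A : Set E} (hA : ∀ x ∈ A, t ≤ ‖x - c‖) : μH[d] (radialProj c t '' A) ≤ μH[d] A := by
  simpa using ((lipschitzOnWith_radialProj c ht).mono hA).hausdorffMeasure_image_le hd

lemma hausdorffMeasure_sphere_inter_closedBall_le {d : ℝ} (hd : 0 ≤ d) (c y : E) {t : ℝ}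
    (ht : 0 < t) (s : ℝ) : μH[d] (sphere c t ∩ closedBall y s) ≤ μH[d] (sphere y s) :=
  calc μH[d] (sphere c t ∩ closedBall y s)
      ≤ μH[d] (radialProj c t '' (sphere y s ∩ {x | t ≤ ‖x - c‖})) :=
        measure_mono (sphere_inter_closedBall_subset_image_radialProj ht)
    _ ≤ μH[d] (sphere y s ∩ {x | t ≤ ‖x - c‖}) :=
        hausdorffMeasure_image_radialProj_le hd c ht fun _ hx => hx.2
    _ ≤ μH[d] (sphere y s) := measure_mono inter_subset_left

open scoped Pointwise in
lemma hausdorffMeasure_sphere_zero {d : ℝ} (hd : 0 ≤ d) {s : ℝ} (hs : 0 < s) :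
    μH[d] (sphere (0 : E) s) = μH[d] (sphere (0 : E) 1) * ENNReal.ofReal (s ^ d) := by
  have hscale : sphere (0 : E) s = s • sphere (0 : E) 1 := by
    rw [smul_sphere' hs.ne', smul_zero, Real.norm_of_nonneg hs.le, mul_one]
  rw [hscale, Measure.hausdorffMeasure_smul₀ hd hs.ne', ENNReal.smul_def, smul_eq_mul, mul_comm,
    ENNReal.ofReal, Real.toNNReal_rpow_of_nonneg hs.le, Real.nnnorm_of_nonneg hs.le,
    Real.toNNReal_of_nonneg hs.le]

lemma hausdorffMeasure_cap_lt_top {d : ℕ} (hE : finrank ℝ E = d + 1) {v : E} (hv : ‖v‖ = 1) :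
    μH[d] (sphere (0 : E) 1 ∩ {x | 1 / 2 < ⟪v, x⟫}) < ∞ := by
  have : Fact (finrank ℝ E = d + 1) := ⟨hE⟩
  have : FiniteDimensional ℝ E := .of_finrank_eq_succ hE
  have hfinrank : finrank ℝ (ℝ ∙ v)ᗮ = d :=
    Submodule.finrank_orthogonal_span_singleton (norm_ne_zero_iff.1 (hv ▸ one_ne_zero))
  have hisom : Isometry fun h : (ℝ ∙ v)ᗮ => v + (h : E) :=
    (IsometryEquiv.addLeft v).isometry.comp isometry_subtype_coe
  set T : Set E := (fun h : (ℝ ∙ v)ᗮ => v + (h : E)) '' closedBall 0 3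
  have hT : μH[d] T < ∞ := by
    rw [hisom.hausdorffMeasure_image (.inl d.cast_nonneg), ← hfinrank]
    exact (isCompact_closedBall 0 3).measure_lt_top
  have houtside : ∀ x ∈ T, 1 ≤ ‖x - 0‖ := by
    rintro _ ⟨h, -, rfl⟩
    rw [sub_zero]
    exact one_le_norm_add_of_mem_orthogonal hv h.2
  calc μH[d] (sphere (0 : E) 1 ∩ {x | 1 / 2 < ⟪v, x⟫})
      ≤ μH[d] (radialProj 0 1 '' T) := measure_mono (cap_subset_image_radialProj hv)
    _ ≤ μH[d] T := hausdorffMeasure_image_radialProj_le d.cast_nonneg 0 one_pos houtside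
    _ < ∞ := hT

lemma hausdorffMeasure_unitSphere_lt_top {d : ℕ} (hE : finrank ℝ E = d + 1) :
    μH[d] (sphere (0 : E) 1) < ∞ := by
  have : FiniteDimensional ℝ E := .of_finrank_eq_succ hE
  refine (isCompact_sphere 0 1).measure_lt_top_of_nhdsWithin fun v hv => ?_
  have hv : ‖v‖ = 1 := mem_sphere_zero_iff_norm.1 hv
  have hopen : IsOpen {x : E | 1 / 2 < ⟪v, x⟫} := isOpen_lt continuous_const (by fun_prop)
  have hmem : v ∈ {x : E | 1 / 2 < ⟪v, x⟫} := by
    rw [mem_ofPred_eq, real_inner_self_eq_norm_sq, hv]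
    norm_num
  exact ⟨_, inter_mem_nhdsWithin _ (hopen.mem_nhds hmem), hausdorffMeasure_cap_lt_top hE hv⟩

end SphereMeasure

section PowerIntegral

lemma setLIntegral_Ioc_rpow {r b : ℝ} (hr : -1 < r) (hb : 0 ≤ b) :
    ∫⁻ τ in Ioc 0 b, ENNReal.ofReal (τ ^ r) = ENNReal.ofReal (b ^ (r + 1) / (r + 1)) := by
  have hint : IntegrableOn (fun τ : ℝ => τ ^ r) (Ioc 0 b) :=
    (intervalIntegrable_iff_integrableOn_Ioc_of_le hb).1
      (intervalIntegral.intervalIntegrable_rpow' hr)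
  have hnonneg : ∀ᵐ τ ∂volume.restrict (Ioc 0 b), 0 ≤ τ ^ r :=
    (ae_restrict_mem measurableSet_Ioc).mono fun τ hτ => Real.rpow_nonneg hτ.1.le r
  rw [← ofReal_integral_eq_lintegral_ofReal hint hnonneg, ← intervalIntegral.integral_of_le hb,
    integral_rpow (.inl hr), Real.zero_rpow (by linarith), sub_zero]

variable {E : Type*} [NormedAddCommGroup E] [MeasurableSpace E]

lemma measure_setOf_le_norm_rpow_neg_le {μ : Measure E} {p q m : ℝ} {K : ℝ≥0∞} (hp : 0 < p)
    (hm : 0 < m) (hgrowth : ∀ s, m ≤ s → μ (closedBall 0 s) ≤ K * ENNReal.ofReal (s ^ q))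
    (hfar : ∀ᵐ x ∂μ, m ≤ ‖x‖) {τ : ℝ} (hτ : 0 < τ) :
    μ {x | τ ≤ ‖x‖ ^ (-p)} ≤
      (Ioc 0 (m ^ (-p))).indicator (fun τ => K * ENNReal.ofReal (τ ^ (-(q / p)))) τ := by
  have hp' : -p < 0 := neg_lt_zero.2 hp
  by_cases hτm : τ ≤ m ^ (-p)
  · have hball : {x | τ ≤ ‖x‖ ^ (-p)} ≤ᵐ[μ] closedBall (0 : E) (τ ^ (-p)⁻¹) := by
      filter_upwards [hfar] with x hx (hxτ : τ ≤ ‖x‖ ^ (-p))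
      rw [← Real.le_rpow_inv_iff_of_neg (hm.trans_le hx) hτ hp'] at hxτ
      exact mem_closedBall_zero_iff.2 hxτ
    have hradius : (τ ^ (-p)⁻¹) ^ q = τ ^ (-(q / p)) := by
      rw [← Real.rpow_mul hτ.le, inv_neg, neg_mul, inv_mul_eq_div]
    rw [indicator_of_mem (mem_Ioc.2 ⟨hτ, hτm⟩), ← hradius]
    exact (measure_mono_ae hball).trans
      (hgrowth _ ((Real.le_rpow_inv_iff_of_neg hm hτ hp').2 hτm))
  · have hempty : ∀ᵐ x ∂μ, x ∉ {x : E | τ ≤ ‖x‖ ^ (-p)} := by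
      filter_upwards [hfar] with x hx hxτ
      exact hτm (hxτ.trans (Real.rpow_le_rpow_of_nonpos hm hx hp'.le))
    rw [measure_eq_zero_iff_ae_notMem.2 hempty]
    exact zero_le

lemma lintegral_norm_rpow_neg_le [OpensMeasurableSpace E] {μ : Measure E} {p q m : ℝ} {K : ℝ≥0∞}
    (hp : 0 < p) (hqp : q < p) (hm : 0 < m)
    (hgrowth : ∀ s, m ≤ s → μ (closedBall 0 s) ≤ K * ENNReal.ofReal (s ^ q))
    (hfar : ∀ᵐ x ∂μ, m ≤ ‖x‖) :
    ∫⁻ x, ENNReal.ofReal (‖x‖ ^ (-p)) ∂μ ≤ K * ENNReal.ofReal (p / (p - q) * m ^ (q - p)) := by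
  have hexp : -1 < -(q / p) := neg_lt_neg ((div_lt_one hp).2 hqp)
  calc ∫⁻ x, ENNReal.ofReal (‖x‖ ^ (-p)) ∂μ
      = ∫⁻ τ in Ioi 0, μ {x | τ ≤ ‖x‖ ^ (-p)} :=
        lintegral_eq_lintegral_meas_le μ (.of_forall fun x => by positivity)
          (measurable_norm.pow_const _).aemeasurable
    _ ≤ ∫⁻ τ in Ioi 0,
          (Ioc 0 (m ^ (-p))).indicator (fun τ => K * ENNReal.ofReal (τ ^ (-(q / p)))) τ :=
        setLIntegral_mono' measurableSet_Ioi fun τ hτ =>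
          measure_setOf_le_norm_rpow_neg_le hp hm hgrowth hfar hτ
    _ = ∫⁻ τ in Ioc 0 (m ^ (-p)), K * ENNReal.ofReal (τ ^ (-(q / p))) := by
        rw [setLIntegral_indicator measurableSet_Ioc, inter_eq_left.2 Ioc_subset_Ioi_self]
    _ = K * ∫⁻ τ in Ioc 0 (m ^ (-p)), ENNReal.ofReal (τ ^ (-(q / p))) :=
        lintegral_const_mul _ (by fun_prop)
    _ = K * ENNReal.ofReal (p / (p - q) * m ^ (q - p)) := by
        rw [setLIntegral_Ioc_rpow hexp (by positivity), ← Real.rpow_mul hm.le]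
        have hexponent : -p * (-(q / p) + 1) = q - p := by field_simp; ring
        have hfactor : -(q / p) + 1 = (p - q) / p := by field_simp; ring
        rw [hexponent, hfactor, div_div_eq_mul_div, mul_comm (m ^ _), mul_div_right_comm]

end PowerIntegral

section OffcenterSphere

variable {E : Type*} [NormedAddCommGroup E] [InnerProductSpace ℝ E] [MeasurableSpace E]
  [BorelSpace E] {d : ℕ}

lemma setIntegral_sphere_norm_rpow_neg_le (hE : finrank ℝ E = d + 1) {p : ℝ} (hp : d < p)
    {c : E} {t : ℝ} (ht : 0 < t) (htc : t < ‖c‖) :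
    ∫ x in sphere c t, ‖x‖ ^ (-p) ∂μH[d] ≤
      μH[d].real (sphere (0 : E) 1) * (p / (p - d) * (‖c‖ - t) ^ (d - p)) := by
  have hd : (0 : ℝ) ≤ d := d.cast_nonneg
  have hgrowth (s : ℝ) (hs : ‖c‖ - t ≤ s) : μH[d].restrict (sphere c t) (closedBall 0 s) ≤
      μH[d] (sphere (0 : E) 1) * ENNReal.ofReal (s ^ (d : ℝ)) := by
    rw [Measure.restrict_apply measurableSet_closedBall, inter_comm,
      ← hausdorffMeasure_sphere_zero hd ((sub_pos.2 htc).trans_le hs)]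
    exact hausdorffMeasure_sphere_inter_closedBall_le hd c 0 ht s
  have hfar : ∀ᵐ x ∂μH[d].restrict (sphere c t), ‖c‖ - t ≤ ‖x‖ := by
    filter_upwards [ae_restrict_mem isClosed_sphere.measurableSet] with x hx
    linarith [norm_sub_norm_le c x, norm_sub_rev c x, mem_sphere_iff_norm.1 hx]
  rw [integral_eq_lintegral_of_nonneg_ae (.of_forall fun x => by positivity)
    (measurable_norm.pow_const _).aestronglyMeasurable]
  have hbound := lintegral_norm_rpow_neg_le (hd.trans_lt hp) hp (sub_pos.2 htc) hgrowth hfar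
  refine (ENNReal.toReal_mono (ENNReal.mul_ne_top
    (hausdorffMeasure_unitSphere_lt_top hE).ne ENNReal.ofReal_ne_top) hbound).trans_eq ?_
  have hcoeff : 0 ≤ p / (p - d) := div_nonneg (hd.trans hp.le) (sub_pos.2 hp).le
  rw [ENNReal.toReal_mul, measureReal_def, ENNReal.toReal_ofReal
    (mul_nonneg hcoeff (Real.rpow_nonneg (sub_pos.2 htc).le _))]

lemma norm_inv_sq_mul_integral_sphere_le (hE : finrank ℝ E = d + 1) {p : ℝ} (hp : d < p)
    {c : E} {r : ℝ} (hr : 1 ≤ r) (hrc : r < ‖c‖) :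
    ‖(r ^ 2)⁻¹ * ∫ t in (1 : ℝ)..r, t * ∫ x in sphere c t, ‖x‖ ^ (-p) ∂μH[d]‖ ≤
      μH[d].real (sphere (0 : E) 1) * (p / (p - d) * (‖c‖ - r) ^ (d - p)) := by
  set B := μH[d].real (sphere (0 : E) 1) * (p / (p - d) * (‖c‖ - r) ^ (d - p))
  have hcoeff : 0 ≤ p / (p - d) := div_nonneg (d.cast_nonneg.trans hp.le) (sub_pos.2 hp).le
  have hcr : 0 < ‖c‖ - r := sub_pos.2 hrc
  have hB : 0 ≤ B := mul_nonneg measureReal_nonneg (mul_nonneg hcoeff (Real.rpow_nonneg hcr.le _))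
  have hinner {t : ℝ} (ht : t ∈ Ioc 1 r) : ‖∫ x in sphere c t, ‖x‖ ^ (-p) ∂μH[d]‖ ≤ B := by
    rw [Real.norm_of_nonneg (integral_nonneg fun x => by positivity)]
    have hdist : (‖c‖ - t) ^ (d - p) ≤ (‖c‖ - r) ^ (d - p) :=
      Real.rpow_le_rpow_of_nonpos hcr (sub_le_sub_left ht.2 ‖c‖) (sub_neg.2 hp).le
    exact (setIntegral_sphere_norm_rpow_neg_le hE hp (one_pos.trans ht.1) (ht.2.trans_lt hrc)).trans
      (mul_le_mul_of_nonneg_left (mul_le_mul_of_nonneg_left hdist hcoeff) measureReal_nonneg)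
  have houter : ‖∫ t in (1 : ℝ)..r, t * ∫ x in sphere c t, ‖x‖ ^ (-p) ∂μH[d]‖ ≤
      r * B * |r - 1| := by
    refine intervalIntegral.norm_integral_le_of_norm_le_const fun t ht => ?_
    rw [uIoc_of_le hr] at ht
    rw [norm_mul, Real.norm_of_nonneg (by linarith [ht.1])]
    exact mul_le_mul ht.2 (hinner ht) (norm_nonneg _) (by positivity)
  rw [norm_mul, Real.norm_of_nonneg (by positivity), inv_mul_le_iff₀ (by positivity)]
  have hlength : |r - 1| ≤ r := by
    rw [abs_of_nonneg (sub_nonneg.2 hr)]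
    linarith
  calc ‖∫ t in (1 : ℝ)..r, t * ∫ x in sphere c t, ‖x‖ ^ (-p) ∂μH[d]‖
      ≤ r * B * |r - 1| := houter
    _ ≤ r * B * r := mul_le_mul_of_nonneg_left hlength (mul_nonneg (by positivity) hB)
    _ = r ^ 2 * B := by ring

theorem offcenter_cubic_shell_integral_small_general (hE : finrank ℝ E = d + 1) {p : ℝ}
    (hp : d < p) {ι : Type*} {l : Filter ι} {a : ι → E} {ρ : ι → ℝ} (hρ : ∀ᶠ k in l, 1 ≤ ρ k)
    (haρ : Tendsto (fun k => ‖a k‖ - ρ k) l atTop) :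
    Tendsto (fun k => (ρ k ^ 2)⁻¹ *
        ∫ t in (1 : ℝ)..(ρ k), t * ∫ x in sphere (a k) t, ‖x‖ ^ (-p) ∂μH[d])
      l (nhds 0) := by
  have hdecay : Tendsto (fun k => μH[d].real (sphere (0 : E) 1) *
      (p / (p - d) * (‖a k‖ - ρ k) ^ (d - p))) l (nhds 0) := by
    have := (tendsto_rpow_neg_atTop (sub_pos.2 hp)).comp haρ
    simpa only [Function.comp_apply, neg_sub, mul_zero] using
      (this.const_mul (p / (p - d))).const_mul (μH[d].real (sphere (0 : E) 1))
  refine squeeze_zero_norm' ?_ hdecay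
  filter_upwards [hρ, haρ.eventually_gt_atTop 0] with k hk hak
  exact norm_inv_sq_mul_integral_sphere_le hE hp hk (sub_pos.1 hak)

end OffcenterSphere

/-- If `ρ_k > 1`, `ρ_k → ∞` and `‖a_k‖ - ρ_k → ∞`, then
`ρ_k⁻² ∫_1^{ρ_k} t (∫_{S_t(a_k)} ‖x‖⁻³ dH²) dt → 0`. -/
theorem offcenter_cubic_shell_integral_small
    (a : ℕ → EuclideanSpace ℝ (Fin 3)) (ρ : ℕ → ℝ)
    (hρ1 : ∀ k, 1 < ρ k)
    (hρ : Tendsto ρ atTop atTop)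
    (haρ : Tendsto (fun k => ‖a k‖ - ρ k) atTop atTop) :
    Tendsto (fun k => (ρ k ^ 2)⁻¹ *
        ∫ t in (1 : ℝ)..(ρ k), t * ∫ x in Metric.sphere (a k) t, (‖x‖ ^ 3)⁻¹ ∂μH[2])
      atTop (nhds 0) := by
  simpa [Real.rpow_neg] using offcenter_cubic_shell_integral_small_general (d := 2)
    finrank_euclideanSpace_fin (p := 3) (by norm_num) (.of_forall fun k => (hρ1 k).le) haρ
end

section
/- Let a ∈ ℝ³ and let r be a real number with 1 ≤ r ≤ |a|. Then ∫_0^{2π} ∫_{π − 2r^{-1/4}}^{π} r² sinφ · (|a|² + r² − 2|a|r cosφ)^{-1/2} dφ dθ ≤ 4π√r. -/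
/-!
Write `D φ` for the distance from the origin to the points of the sphere at polar angle `φ`,
measured at the center `a` from the direction of the origin. By the law of cosines
`D² = ‖a‖² + r² - 2‖a‖r cos φ`, so `sin φ / D` has the primitive `D / (‖a‖r)`. Moving this primitive
by a constant turns it into `-2 (1 + cos φ) / (‖a‖ + r + D φ)`, which vanishes at `φ = π` and
survives `a = 0`. Hence the integral over `[π - 2δ, π]` is exactly
`8π r² sin² δ / (‖a‖ + r + D (π - 2δ))`. The triangle inequality `r ≤ ‖a‖ + D` bounds the
denominator below by `2r`, and `sin² δ ≤ δ²` gives the bound `4π r δ²`.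
-/

section OppositeSide

open Real

/-- The length of the side opposite to the angle `φ` in a triangle whose other two sides have
lengths `b` and `c`. With `b = ‖a‖` and `c = r` it is the distance from the origin to the points of
the sphere of radius `r` centered at `a` that are seen from `a` at angle `φ` to the origin. -/
noncomputable def oppositeSide (b c φ : ℝ) : ℝ :=
  √(b ^ 2 + c ^ 2 - 2 * b * c * cos φ)

lemma law_of_cosines_eq_sq_add_sq (b c φ : ℝ) :
    b ^ 2 + c ^ 2 - 2 * b * c * cos φ = (b - c * cos φ) ^ 2 + (c * sin φ) ^ 2 := by
  linear_combination -c ^ 2 * sin_sq_add_cos_sq φ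

lemma law_of_cosines_nonneg (b c φ : ℝ) : 0 ≤ b ^ 2 + c ^ 2 - 2 * b * c * cos φ := by
  rw [law_of_cosines_eq_sq_add_sq]
  positivity

lemma oppositeSide_nonneg (b c φ : ℝ) : 0 ≤ oppositeSide b c φ :=
  sqrt_nonneg _

lemma add_add_oppositeSide_pos {b c : ℝ} (hb : 0 ≤ b) (hc : 0 < c) (φ : ℝ) :
    0 < b + c + oppositeSide b c φ :=
  add_pos_of_pos_of_nonneg (add_pos_of_nonneg_of_pos hb hc) (oppositeSide_nonneg b c φ)

lemma sq_oppositeSide (b c φ : ℝ) :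
    oppositeSide b c φ ^ 2 = b ^ 2 + c ^ 2 - 2 * b * c * cos φ :=
  sq_sqrt (law_of_cosines_nonneg b c φ)

lemma rpow_neg_half_eq_inv_oppositeSide (b c φ : ℝ) :
    (b ^ 2 + c ^ 2 - 2 * b * c * cos φ) ^ (-(1 / 2 : ℝ)) = (oppositeSide b c φ)⁻¹ := by
  rw [rpow_neg (law_of_cosines_nonneg b c φ), ← sqrt_eq_rpow, oppositeSide]

lemma abs_mul_sin_le_oppositeSide (b c φ : ℝ) : |c * sin φ| ≤ oppositeSide b c φ := by
  refine abs_le_sqrt ?_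
  rw [law_of_cosines_eq_sq_add_sq]
  exact le_add_of_nonneg_left (sq_nonneg _)

lemma oppositeSide_ne_zero {b c φ : ℝ} (hc : c ≠ 0) (hφ : sin φ ≠ 0) :
    oppositeSide b c φ ≠ 0 :=
  ((abs_pos.2 (mul_ne_zero hc hφ)).trans_le (abs_mul_sin_le_oppositeSide b c φ)).ne'

lemma le_add_oppositeSide {b c : ℝ} (hb : 0 ≤ b) (hc : 0 ≤ c) (φ : ℝ) :
    c ≤ b + oppositeSide b c φ := by
  have h : c - b ≤ oppositeSide b c φ := by
    refine le_sqrt_of_sq_le ?_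
    nlinarith [mul_nonneg (mul_nonneg hb hc) (sub_nonneg.2 (cos_le_one φ))]
  linarith

@[fun_prop]
lemma continuous_oppositeSide (b c : ℝ) : Continuous (oppositeSide b c) := by
  change Continuous fun φ ↦ √(b ^ 2 + c ^ 2 - 2 * b * c * cos φ)
  fun_prop

lemma hasDerivAt_oppositeSide {b c φ : ℝ} (h : oppositeSide b c φ ≠ 0) :
    HasDerivAt (oppositeSide b c) (b * c * sin φ / oppositeSide b c φ) φ := by
  have h_sq : b ^ 2 + c ^ 2 - 2 * b * c * cos φ ≠ 0 := by
    rw [← sq_oppositeSide]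
    exact pow_ne_zero 2 h
  refine ((((hasDerivAt_cos φ).const_mul (2 * b * c)).const_sub
    (b ^ 2 + c ^ 2)).sqrt h_sq).congr_deriv ?_
  change _ / (2 * oppositeSide b c φ) = _
  field_simp

lemma hasDerivAt_one_add_cos_div_add_oppositeSide {b c φ : ℝ} (hb : 0 ≤ b) (hc : 0 < c)
    (h : oppositeSide b c φ ≠ 0) :
    HasDerivAt (fun x ↦ -2 * (1 + cos x) / (b + c + oppositeSide b c x))
      (sin φ / oppositeSide b c φ) φ := by
  have h_den := (add_add_oppositeSide_pos hb hc φ).ne'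
  refine ((((hasDerivAt_cos φ).const_add 1).const_mul (-2)).div
    ((hasDerivAt_oppositeSide h).const_add (b + c)) h_den).congr_deriv ?_
  field_simp
  linear_combination sin φ * sq_oppositeSide b c φ

lemma intervalIntegrable_sin_div_oppositeSide (b : ℝ) {c : ℝ} (hc : 0 < c) (α β : ℝ) :
    IntervalIntegrable (fun φ ↦ sin φ / oppositeSide b c φ) MeasureTheory.volume α β := by
  refine (intervalIntegrable_const (c := c⁻¹)).mono_fun'
    (measurable_sin.div (continuous_oppositeSide b c).measurable).aestronglyMeasurable
    (.of_forall fun φ ↦ ?_)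
  have h_sin : c * |sin φ| ≤ oppositeSide b c φ := by
    simpa only [abs_mul, abs_of_pos hc] using abs_mul_sin_le_oppositeSide b c φ
  change |sin φ / oppositeSide b c φ| ≤ c⁻¹
  rw [abs_div, abs_of_nonneg (oppositeSide_nonneg b c φ)]
  refine div_le_of_le_mul₀ (oppositeSide_nonneg b c φ) (inv_nonneg.2 hc.le) ?_
  rwa [inv_mul_eq_div, le_div_iff₀' hc]

lemma countable_setOf_sin_eq_zero : {φ : ℝ | sin φ = 0}.Countable := by
  simp only [sin_eq_zero_iff]
  exact Set.countable_range _

theorem integral_sin_div_oppositeSide {b c : ℝ} (hb : 0 ≤ b) (hc : 0 < c) (α β : ℝ) :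
    ∫ φ in α..β, sin φ / oppositeSide b c φ =
      2 * (1 + cos α) / (b + c + oppositeSide b c α) -
        2 * (1 + cos β) / (b + c + oppositeSide b c β) := by
  have h_cont : Continuous fun φ ↦ -2 * (1 + cos φ) / (b + c + oppositeSide b c φ) := by
    fun_prop (disch := exact fun φ ↦ (add_add_oppositeSide_pos hb hc φ).ne')
  -- When `b = c` the distance vanishes on `2πℤ`, where the primitive has corners.
  rw [MeasureTheory.integral_eq_of_hasDerivAt_off_countable
    (fun φ ↦ -2 * (1 + cos φ) / (b + c + oppositeSide b c φ)) _ countable_setOf_sin_eq_zero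
    h_cont.continuousOn
    (fun φ hφ ↦ hasDerivAt_one_add_cos_div_add_oppositeSide hb hc
      (oppositeSide_ne_zero hc.ne' hφ.2))
    (intervalIntegrable_sin_div_oppositeSide b hc α β)]
  ring

theorem integral_sin_div_oppositeSide_cap {b c : ℝ} (hb : 0 ≤ b) (hc : 0 < c) (δ : ℝ) :
    ∫ φ in (π - 2 * δ)..π, sin φ / oppositeSide b c φ =
      4 * sin δ ^ 2 / (b + c + oppositeSide b c (π - 2 * δ)) := by
  rw [integral_sin_div_oppositeSide hb hc, cos_pi, cos_pi_sub, cos_two_mul, cos_sq']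
  ring

theorem integral_sin_div_oppositeSide_cap_le {b c : ℝ} (hb : 0 ≤ b) (hc : 0 < c) (δ : ℝ) :
    ∫ φ in (π - 2 * δ)..π, sin φ / oppositeSide b c φ ≤ 2 * δ ^ 2 / c := by
  have h_den : 2 * c ≤ b + c + oppositeSide b c (π - 2 * δ) := by
    linarith [le_add_oppositeSide hb hc.le (π - 2 * δ)]
  have h_sin : sin δ ^ 2 ≤ δ ^ 2 := sq_le_sq.2 abs_sin_le_abs
  calc ∫ φ in (π - 2 * δ)..π, sin φ / oppositeSide b c φ
      = 4 * sin δ ^ 2 / (b + c + oppositeSide b c (π - 2 * δ)) :=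
        integral_sin_div_oppositeSide_cap hb hc δ
    _ ≤ 4 * δ ^ 2 / (2 * c) := by gcongr
    _ = 2 * δ ^ 2 / c := by ring

theorem cap_integral_inv_norm_le_general {A r : ℝ} (hA : 0 ≤ A) (hr : 0 < r) (δ : ℝ) :
    (∫ _ in (0 : ℝ)..(2 * π), ∫ φ in (π - 2 * δ)..π,
        r ^ 2 * sin φ * (A ^ 2 + r ^ 2 - 2 * A * r * cos φ) ^ (-(1 / 2 : ℝ)))
      ≤ 4 * π * (r * δ ^ 2) := by
  simp only [rpow_neg_half_eq_inv_oppositeSide, mul_assoc (r ^ 2), ← div_eq_mul_inv,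
    intervalIntegral.integral_const_mul, intervalIntegral.integral_const, sub_zero, smul_eq_mul]
  calc r ^ 2 * (2 * π * ∫ φ in (π - 2 * δ)..π, sin φ / oppositeSide A r φ)
      ≤ r ^ 2 * (2 * π * (2 * δ ^ 2 / r)) := by
        gcongr
        exact integral_sin_div_oppositeSide_cap_le hA hr δ
    _ = 4 * π * (r * δ ^ 2) := by
        field_simp
        ring

lemma mul_sq_rpow_neg_quarter {r : ℝ} (hr : 0 ≤ r) :
    r * (r ^ (-(1 / 4 : ℝ))) ^ 2 = √r := by
  rw [← rpow_mul_natCast hr, sqrt_eq_rpow, ← rpow_one_add' hr (by norm_num)]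
  norm_num

end OppositeSide

/-- Spherical-cap estimate: for `1 ≤ r ≤ ‖a‖`, the integral of `1/|x|` over the cap of
angular width `2 r^{-1/4}` (around the point closest to the origin) of the sphere of
radius `r` centered at `a`, written in spherical coordinates, is at most `4π√r`. -/
theorem cap_integral_inv_norm_le (a : EuclideanSpace ℝ (Fin 3)) (r : ℝ)
    (hr : 1 ≤ r) (hra : r ≤ ‖a‖) :
    (∫ θ in (0 : ℝ)..(2 * Real.pi),
        ∫ φ in (Real.pi - 2 * r ^ (-(1 / 4 : ℝ)))..Real.pi,
          r ^ 2 * Real.sin φ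
            * (‖a‖ ^ 2 + r ^ 2 - 2 * ‖a‖ * r * Real.cos φ) ^ (-(1 / 2 : ℝ)))
      ≤ 4 * Real.pi * Real.sqrt r := by
  have hr₀ : 0 < r := one_pos.trans_le hr
  exact mul_sq_rpow_neg_quarter hr₀.le ▸
    cap_integral_inv_norm_le_general (norm_nonneg a) hr₀ (r ^ (-(1 / 4 : ℝ)))
end

section
/- Let a ∈ ℝ³ and let r, s be real numbers with 0 < s ≤ r ≤ |a|. Then ∫_{{x ∈ ℝ³ : r − s ≤ |x − a| ≤ r + s}} |x|^{-1} dx ≤ 32π·r·s, where the integral is with respect to Lebesgue measure on ℝ³. -/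
open MeasureTheory

/-! Put the centre of the shell at the origin, so that the integrand becomes `‖x + a‖⁻¹`, and let
`u` be a unit vector along `a`. The level sets of `x ↦ (‖x‖, ⟪u, x⟫)` are circles, and Lebesgue
measure pushes forward to `2π t dt dz` on `|z| < t` (Archimedes' hat-box theorem). In these
coordinates `‖x + a‖ ^ 2 = t ^ 2 + 2 * ‖a‖ * z + ‖a‖ ^ 2`, whose inverse square root has an
elementary primitive in `z`. Hence the integral of `‖x‖⁻¹` over the sphere of radius `t` about `a`
is exactly `4π t ^ 2 / max t ‖a‖` (Newton's shell theorem). This is at most `4π t` wherever `a` is,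
and integrating over `r - s ≤ t ≤ r + s` gives `8π r s`.
-/

open Set Metric Module Submodule
open scoped ENNReal RealInnerProductSpace

theorem lintegral_Ioo_ofReal_deriv {a b : ℝ} {g g' : ℝ → ℝ} (hab : a ≤ b)
    (hcont : ContinuousOn g (Icc a b)) (hderiv : ∀ x ∈ Ioo a b, HasDerivAt g (g' x) x)
    (hnonneg : ∀ x ∈ Ioo a b, 0 ≤ g' x) :
    ∫⁻ x in Ioo a b, ENNReal.ofReal (g' x) = ENNReal.ofReal (g b - g a) := by
  have hint : IntegrableOn g' (Ioc a b) :=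
    intervalIntegral.integrableOn_deriv_of_nonneg hcont hderiv hnonneg
  rw [← ofReal_integral_eq_lintegral_ofReal (hint.mono_set Ioo_subset_Ioc_self)
      (ae_restrict_of_forall_mem measurableSet_Ioo hnonneg),
    ← integral_Ioc_eq_integral_Ioo, ← intervalIntegral.integral_of_le hab,
    intervalIntegral.integral_eq_sub_of_hasDerivAt_of_le hab hcont hderiv
      ((intervalIntegrable_iff_integrableOn_Ioc_of_le hab).2 hint)]

theorem lintegral_Icc_ofReal_id {a b : ℝ} (ha : 0 ≤ a) (hab : a ≤ b) :
    ∫⁻ t in Icc a b, ENNReal.ofReal t = ENNReal.ofReal ((b ^ 2 - a ^ 2) / 2) := by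
  rw [← setLIntegral_congr Ioo_ae_eq_Icc,
    lintegral_Ioo_ofReal_deriv (g := fun t ↦ t ^ 2 / 2) hab (by fun_prop)
      (fun t _ ↦ by simpa using (hasDerivAt_pow 2 t).div_const 2)
      (fun t ht ↦ ha.trans ht.1.le), sub_div]

theorem image_sqrt_sq_add_sq_Ioi (z : ℝ) :
    (fun ρ ↦ √(z ^ 2 + ρ ^ 2)) '' Ioi 0 = Ioi |z| := by
  ext t
  constructor
  · rintro ⟨ρ, hρ, rfl⟩
    rw [mem_Ioi, ← Real.sqrt_sq_eq_abs]
    exact Real.sqrt_lt_sqrt (sq_nonneg z) (lt_add_of_pos_right _ (pow_pos hρ 2))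
  · intro (ht : |z| < t)
    have hzt : 0 < t ^ 2 - z ^ 2 := sub_pos.2 (sq_lt_sq.2 (ht.trans_le (le_abs_self t)))
    refine ⟨√(t ^ 2 - z ^ 2), Real.sqrt_pos.2 hzt, ?_⟩
    simp only [Real.sq_sqrt hzt.le, add_sub_cancel]
    exact Real.sqrt_sq ((abs_nonneg z).trans ht.le)

theorem lintegral_Ioi_mul_comp_sqrt_sq_add_sq (z : ℝ) (f : ℝ → ℝ≥0∞) :
    ∫⁻ ρ in Ioi 0, ENNReal.ofReal ρ * f √(z ^ 2 + ρ ^ 2) =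
      ∫⁻ t in Ioi |z|, ENNReal.ofReal t * f t := by
  have hpos {ρ : ℝ} (hρ : ρ ∈ Ioi 0) : 0 < z ^ 2 + ρ ^ 2 :=
    add_pos_of_nonneg_of_pos (sq_nonneg z) (pow_pos hρ 2)
  have hderiv : ∀ ρ ∈ Ioi (0 : ℝ),
      HasDerivWithinAt (fun ρ ↦ √(z ^ 2 + ρ ^ 2)) (ρ / √(z ^ 2 + ρ ^ 2)) (Ioi 0) ρ := by
    intro ρ hρ
    convert! (((hasDerivAt_pow 2 ρ).const_add (z ^ 2)).sqrt (hpos hρ).ne').hasDerivWithinAt using 1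
    simp [mul_div_mul_left]
  have hmono : MonotoneOn (fun ρ ↦ √(z ^ 2 + ρ ^ 2)) (Ioi 0) := by
    intro ρ (hρ : 0 < ρ) σ _ hρσ
    dsimp only
    gcongr
  rw [← image_sqrt_sq_add_sq_Ioi,
    lintegral_image_eq_lintegral_deriv_mul_of_monotoneOn measurableSet_Ioi hderiv hmono]
  refine setLIntegral_congr_fun measurableSet_Ioi fun ρ hρ ↦ ?_
  have hsqrt := Real.sqrt_pos.2 (hpos hρ)
  rw [← mul_assoc, ← ENNReal.ofReal_mul (div_nonneg (le_of_lt hρ) hsqrt.le),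
    div_mul_cancel₀ _ hsqrt.ne']

theorem lintegral_lintegral_Ioi_abs {f : ℝ → ℝ → ℝ≥0∞} (hf : Measurable (Function.uncurry f)) :
    ∫⁻ z, ∫⁻ t in Ioi |z|, f t z = ∫⁻ t in Ioi 0, ∫⁻ z in Ioo (-t) t, f t z := by
  have hmeas : Measurable ({p : ℝ × ℝ | |p.1| < p.2}.indicator fun p ↦ f p.2 p.1) :=
    (hf.comp measurable_swap).indicator (measurableSet_lt (by fun_prop) (by fun_prop))
  calc ∫⁻ z, ∫⁻ t in Ioi |z|, f t z
      = ∫⁻ z, ∫⁻ t, {p : ℝ × ℝ | |p.1| < p.2}.indicator (fun p ↦ f p.2 p.1) (z, t) :=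
        lintegral_congr fun z ↦ (lintegral_indicator measurableSet_Ioi _).symm
    _ = ∫⁻ t, ∫⁻ z, {p : ℝ × ℝ | |p.1| < p.2}.indicator (fun p ↦ f p.2 p.1) (z, t) :=
        lintegral_lintegral_swap hmeas.aemeasurable
    _ = ∫⁻ t, ∫⁻ z in Ioo (-t) t, f t z := by
        refine lintegral_congr fun t ↦ ?_
        rw [← lintegral_indicator measurableSet_Ioo]
        simp only [indicator_apply, mem_ofPred_eq, abs_lt, mem_Ioo]
    _ = ∫⁻ t in Ioi 0, ∫⁻ z in Ioo (-t) t, f t z := by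
        rw [← lintegral_indicator measurableSet_Ioi]
        refine lintegral_congr fun t ↦ ?_
        by_cases ht : 0 < t
        · rw [indicator_of_mem (mem_Ioi.2 ht)]
        · rw [indicator_of_notMem (notMem_Ioi.2 (not_lt.1 ht)), Ioo_eq_empty (by linarith),
            setLIntegral_empty]

theorem lintegral_Ioo_inv_sqrt {t A : ℝ} (ht : 0 < t) (hA : 0 ≤ A) :
    ∫⁻ z in Ioo (-t) t, ENNReal.ofReal (√(t ^ 2 + 2 * A * z + A ^ 2))⁻¹ =
      ENNReal.ofReal (2 * t / max t A) := by
  rcases hA.eq_or_lt with rfl | hA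
  · simp [Real.sqrt_sq ht.le, max_eq_left ht.le,
      ← ENNReal.ofReal_mul (inv_nonneg.2 ht.le), div_eq_inv_mul, two_mul]
  have hpos {z : ℝ} (hz : z ∈ Ioo (-t) t) : 0 < t ^ 2 + 2 * A * z + A ^ 2 := by
    nlinarith [sq_nonneg (t - A), mul_pos hA (neg_lt_iff_pos_add.1 hz.1)]
  have hderiv : ∀ z ∈ Ioo (-t) t, HasDerivAt (fun z ↦ √(t ^ 2 + 2 * A * z + A ^ 2) / A)
      (√(t ^ 2 + 2 * A * z + A ^ 2))⁻¹ z := by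
    intro z hz
    have hsqrt := (Real.sqrt_pos.2 (hpos hz)).ne'
    convert! (((((hasDerivAt_id' z).const_mul (2 * A)).const_add (t ^ 2)).add_const
      (A ^ 2)).sqrt (hpos hz).ne').div_const A using 1
    field_simp
  rw [lintegral_Ioo_ofReal_deriv (by linarith) (by fun_prop) hderiv
    fun z _ ↦ inv_nonneg.2 (Real.sqrt_nonneg _)]
  have hright : t ^ 2 + 2 * A * t + A ^ 2 = (t + A) ^ 2 := by ring
  have hleft : t ^ 2 + 2 * A * -t + A ^ 2 = (t - A) ^ 2 := by ring
  rw [hright, hleft, Real.sqrt_sq (by positivity), Real.sqrt_sq_eq_abs]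
  congr 1
  rcases le_total t A with h | h
  · rw [abs_of_nonpos (sub_nonpos.2 h), max_eq_right h]
    ring
  · rw [abs_of_nonneg (sub_nonneg.2 h), max_eq_left h]
    field_simp
    ring

theorem lintegral_fun_norm_addHaar {E : Type*} [NormedAddCommGroup E] [NormedSpace ℝ E]
    [Nontrivial E] [FiniteDimensional ℝ E] [MeasurableSpace E] [BorelSpace E]
    (μ : Measure E) [μ.IsAddHaarMeasure] {f : ℝ → ℝ≥0∞} (hf : Measurable f) :
    ∫⁻ x, f ‖x‖ ∂μ = finrank ℝ E * μ (ball 0 1) *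
      ∫⁻ ρ in Ioi (0 : ℝ), ENNReal.ofReal (ρ ^ (finrank ℝ E - 1)) * f ρ := by
  calc ∫⁻ x, f ‖x‖ ∂μ = ∫⁻ x : ({0}ᶜ : Set E), f ‖x.1‖ ∂(μ.comap (↑)) := by
        rw [lintegral_subtype_comap (measurableSet_singleton _).compl fun x ↦ f ‖x‖,
          restrict_compl_singleton]
    _ = ∫⁻ p, f p.2 ∂μ.toSphere.prod (.volumeIoiPow (finrank ℝ E - 1)) := by
        simpa using μ.measurePreserving_homeomorphUnitSphereProd.lintegral_comp_emb
          (Homeomorph.measurableEmbedding _) (f ∘ Subtype.val ∘ Prod.snd)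
    _ = μ.toSphere univ * ∫⁻ ρ : Ioi (0 : ℝ), f ρ ∂.volumeIoiPow (finrank ℝ E - 1) := by
        rw [lintegral_prod _ (by fun_prop)]
        simp only [lintegral_const, mul_comm]
    _ = _ := by
        rw [μ.toSphere_apply_univ, Measure.volumeIoiPow,
          lintegral_withDensity_eq_lintegral_mul _ (by fun_prop) (by fun_prop),
          ← lintegral_subtype_comap measurableSet_Ioi]
        rfl

theorem exists_norm_eq_one_norm_smul_eq {E : Type*} [NormedAddCommGroup E] [NormedSpace ℝ E]
    [Nontrivial E] (a : E) : ∃ u : E, ‖u‖ = 1 ∧ ‖a‖ • u = a := by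
  rcases eq_or_ne a 0 with rfl | ha
  · obtain ⟨u, hu⟩ := exists_norm_eq E zero_le_one
    exact ⟨u, hu, by simp⟩
  · exact ⟨‖a‖⁻¹ • a, norm_smul_inv_norm ha, smul_inv_smul₀ (norm_ne_zero_iff.2 ha) a⟩

section InnerProductSpace

variable {E : Type*} [NormedAddCommGroup E] [InnerProductSpace ℝ E] [FiniteDimensional ℝ E]
  [MeasurableSpace E] [BorelSpace E]

theorem lintegral_eq_lintegral_lintegral_orthogonal (K : Submodule ℝ E) {f : E → ℝ≥0∞}
    (hf : Measurable f) : ∫⁻ x, f x = ∫⁻ y : K, ∫⁻ w : Kᗮ, f (y + w) := by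
  have hpres : MeasurePreserving fun p : K × Kᗮ ↦ (p.1 + p.2 : E) :=
    K.orthogonalDecomposition.symm.measurePreserving.comp (WithLp.volume_preserving_toLp K Kᗮ)
  rw [← hpres.lintegral_comp hf, Measure.volume_eq_prod, lintegral_prod _ (by fun_prop)]

theorem lintegral_norm_inner_eq_lintegral_orthogonal {u : E} (hu : ‖u‖ = 1) {f : ℝ → ℝ → ℝ≥0∞}
    (hf : Measurable (Function.uncurry f)) :
    ∫⁻ x, f ‖x‖ ⟪u, x⟫ = ∫⁻ z : ℝ, ∫⁻ w : (ℝ ∙ u)ᗮ, f √(z ^ 2 + ‖w‖ ^ 2) z := by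
  have hinner (z : ℝ) (w : (ℝ ∙ u)ᗮ) : ⟪u, z • u + w⟫ = z := by
    simp [inner_add_right, inner_smul_right, hu, mem_orthogonal_singleton_iff_inner_right.1 w.2]
  have hnorm (z : ℝ) (w : (ℝ ∙ u)ᗮ) : ‖z • u + w‖ = √(z ^ 2 + ‖w‖ ^ 2) := by
    have horth : ⟪z • u, (w : E)⟫ = 0 := by
      rw [inner_smul_left, mem_orthogonal_singleton_iff_inner_right.1 w.2, mul_zero]
    rw [← Real.sqrt_sq (norm_nonneg _), norm_add_sq_real, horth]
    simp [norm_smul, hu]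
  rw [lintegral_eq_lintegral_lintegral_orthogonal (ℝ ∙ u) (f := fun x ↦ f ‖x‖ ⟪u, x⟫)
      (hf.comp (by fun_prop : Measurable fun x ↦ (‖x‖, ⟪u, x⟫))),
    ← (LinearIsometryEquiv.toSpanUnitSingleton u hu).measurePreserving.lintegral_comp_emb
      (LinearIsometryEquiv.toSpanUnitSingleton u hu).toHomeomorph.measurableEmbedding]
  simp only [LinearIsometryEquiv.toSpanUnitSingleton_apply, hinner, hnorm]

theorem lintegral_fun_norm_of_finrank_eq_two (hE : finrank ℝ E = 2) {f : ℝ → ℝ≥0∞}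
    (hf : Measurable f) :
    ∫⁻ x : E, f ‖x‖ =
      ENNReal.ofReal (2 * Real.pi) * ∫⁻ ρ in Ioi 0, ENNReal.ofReal ρ * f ρ := by
  have : Nontrivial E := nontrivial_of_finrank_pos (R := ℝ) (by lia)
  simp [lintegral_fun_norm_addHaar volume hf, hE,
    InnerProductSpace.volume_ball_of_dim_even (k := 1) hE, ENNReal.ofReal_mul]

theorem lintegral_norm_inner_of_finrank_eq_three (hE : finrank ℝ E = 3) {u : E} (hu : ‖u‖ = 1)
    {f : ℝ → ℝ → ℝ≥0∞} (hf : Measurable (Function.uncurry f)) :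
    ∫⁻ x, f ‖x‖ ⟪u, x⟫ = ENNReal.ofReal (2 * Real.pi) *
      ∫⁻ t in Ioi 0, ∫⁻ z in Ioo (-t) t, ENNReal.ofReal t * f t z := by
  have : Fact (finrank ℝ E = 2 + 1) := ⟨hE⟩
  have hplane : finrank ℝ (ℝ ∙ u)ᗮ = 2 :=
    finrank_orthogonal_span_singleton (norm_ne_zero_iff.1 (hu ▸ one_ne_zero))
  have hslice (z : ℝ) : ∫⁻ w : (ℝ ∙ u)ᗮ, f √(z ^ 2 + ‖w‖ ^ 2) z =
      ENNReal.ofReal (2 * Real.pi) * ∫⁻ t in Ioi |z|, ENNReal.ofReal t * f t z := by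
    rw [lintegral_fun_norm_of_finrank_eq_two hplane (f := fun ρ ↦ f √(z ^ 2 + ρ ^ 2) z)
        (hf.comp (by fun_prop : Measurable fun ρ ↦ (√(z ^ 2 + ρ ^ 2), z))),
      lintegral_Ioi_mul_comp_sqrt_sq_add_sq z fun t ↦ f t z]
  rw [lintegral_norm_inner_eq_lintegral_orthogonal hu hf, lintegral_congr hslice,
    lintegral_const_mul' _ _ ENNReal.ofReal_ne_top,
    lintegral_lintegral_Ioi_abs (f := fun t z ↦ ENNReal.ofReal t * f t z)
      ((by fun_prop : Measurable fun p : ℝ × ℝ ↦ ENNReal.ofReal p.1).mul hf)]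

theorem lintegral_fun_norm_sub_mul_inv_norm (hE : finrank ℝ E = 3) (a : E) {φ : ℝ → ℝ≥0∞}
    (hφ : Measurable φ) :
    ∫⁻ x, φ ‖x - a‖ * ENNReal.ofReal ‖x‖⁻¹ = ENNReal.ofReal (4 * Real.pi) *
      ∫⁻ t in Ioi 0, φ t * ENNReal.ofReal (t ^ 2 / max t ‖a‖) := by
  have : Nontrivial E := nontrivial_of_finrank_pos (R := ℝ) (by lia)
  obtain ⟨u, hu, hua⟩ := exists_norm_eq_one_norm_smul_eq a
  have hnorm (x : E) : ‖x + a‖ = √(‖x‖ ^ 2 + 2 * ‖a‖ * ⟪u, x⟫ + ‖a‖ ^ 2) := by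
    have hinner : ⟪x, a⟫ = ‖a‖ * ⟪u, x⟫ := by
      rw [← hua, inner_smul_right, hua, real_inner_comm]
    rw [mul_assoc, ← hinner, ← norm_add_sq_real, Real.sqrt_sq (norm_nonneg _)]
  have hsphere {t : ℝ} (ht : t ∈ Ioi 0) :
      ∫⁻ z in Ioo (-t) t, ENNReal.ofReal t *
          (φ t * ENNReal.ofReal (√(t ^ 2 + 2 * ‖a‖ * z + ‖a‖ ^ 2))⁻¹) =
        ENNReal.ofReal 2 * (φ t * ENNReal.ofReal (t ^ 2 / max t ‖a‖)) := by
    have ht : 0 < t := ht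
    rw [lintegral_const_mul _ (by fun_prop), lintegral_const_mul _ (by fun_prop),
      lintegral_Ioo_inv_sqrt ht (norm_nonneg a), mul_left_comm, ← ENNReal.ofReal_mul ht.le,
      mul_left_comm (ENNReal.ofReal 2), ← ENNReal.ofReal_mul zero_le_two]
    congr 2
    ring
  rw [← lintegral_add_right_eq_self _ a]
  simp only [add_sub_cancel_right, hnorm]
  rw [lintegral_norm_inner_of_finrank_eq_three hE hu
      (f := fun t z ↦ φ t * ENNReal.ofReal (√(t ^ 2 + 2 * ‖a‖ * z + ‖a‖ ^ 2))⁻¹) (by fun_prop),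
    setLIntegral_congr_fun measurableSet_Ioi fun t ↦ hsphere,
    lintegral_const_mul' _ _ ENNReal.ofReal_ne_top, ← mul_assoc,
    ← ENNReal.ofReal_mul (by positivity)]
  congr 2
  ring

theorem shell_integral_inv_norm_le_general (hE : finrank ℝ E = 3) (a : E) {r s : ℝ} (hs : 0 ≤ s)
    (hsr : s ≤ r) :
    ∫⁻ x in {x : E | r - s ≤ ‖x - a‖ ∧ ‖x - a‖ ≤ r + s}, ENNReal.ofReal ‖x‖⁻¹
      ≤ ENNReal.ofReal (8 * Real.pi * r * s) := by
  have hmeas : MeasurableSet {x : E | r - s ≤ ‖x - a‖ ∧ ‖x - a‖ ≤ r + s} :=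
    measurableSet_Icc.preimage (by fun_prop : Measurable fun x : E ↦ ‖x - a‖)
  calc ∫⁻ x in {x : E | r - s ≤ ‖x - a‖ ∧ ‖x - a‖ ≤ r + s}, ENNReal.ofReal ‖x‖⁻¹
      = ∫⁻ x : E, (Icc (r - s) (r + s)).indicator 1 ‖x - a‖ * ENNReal.ofReal ‖x‖⁻¹ := by
        rw [← lintegral_indicator hmeas]
        simp [indicator_apply]
    _ = ENNReal.ofReal (4 * Real.pi) * ∫⁻ t in Ioi 0,
          (Icc (r - s) (r + s)).indicator 1 t * ENNReal.ofReal (t ^ 2 / max t ‖a‖) :=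
        lintegral_fun_norm_sub_mul_inv_norm hE a (measurable_one.indicator measurableSet_Icc)
    _ ≤ ENNReal.ofReal (4 * Real.pi) * ∫⁻ t in Ioi 0,
          (Icc (r - s) (r + s)).indicator 1 t * ENNReal.ofReal t := by
        gcongr ENNReal.ofReal (4 * Real.pi) * ?_
        refine setLIntegral_mono' measurableSet_Ioi fun t (ht : 0 < t) ↦ ?_
        gcongr
        rw [div_le_iff₀ (lt_max_of_lt_left ht), sq]
        gcongr
        exact le_max_left t ‖a‖
    _ ≤ ENNReal.ofReal (4 * Real.pi) * ∫⁻ t in Icc (r - s) (r + s), ENNReal.ofReal t := by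
        gcongr ENNReal.ofReal (4 * Real.pi) * ?_
        refine (setLIntegral_le_lintegral _ _).trans_eq ?_
        rw [← lintegral_indicator measurableSet_Icc]
        simp [indicator_apply]
    _ = ENNReal.ofReal (8 * Real.pi * r * s) := by
        rw [lintegral_Icc_ofReal_id (sub_nonneg.2 hsr) (by linarith),
          ← ENNReal.ofReal_mul (by positivity)]
        congr 1
        ring

end InnerProductSpace

/-- Thin-shell estimate: for `0 < s ≤ r ≤ ‖a‖`, the integral of `‖x‖⁻¹` (with respect
to Lebesgue measure on `ℝ³`) over the closed spherical shell
`{r - s ≤ ‖x - a‖ ≤ r + s}` is at most `32 π r s`. -/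
theorem shell_integral_inv_norm_le (a : EuclideanSpace ℝ (Fin 3)) (r s : ℝ)
    (hs : 0 < s) (hsr : s ≤ r) (hra : r ≤ ‖a‖) :
    ∫⁻ x in {x : EuclideanSpace ℝ (Fin 3) | r - s ≤ ‖x - a‖ ∧ ‖x - a‖ ≤ r + s},
        ENNReal.ofReal ‖x‖⁻¹
      ≤ ENNReal.ofReal (32 * Real.pi * r * s) := by
  refine (shell_integral_inv_norm_le_general finrank_euclideanSpace_fin a hs.le hsr).trans
    (ENNReal.ofReal_le_ofReal ?_)
  nlinarith [mul_pos (mul_pos Real.pi_pos (hs.trans_le hsr)) hs]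
end
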